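/- Let s > −1/2. There exist δ ∈ (0,1) and C > 0 such that for all u, v ∈ 𝒮(ℝ×ℝ²), ‖(∂_x + ∂_y)(uv)‖_{X^{s,−1/2,1}} ≤ C ‖u‖_{X^{s,(1−δ)/2,1}} ‖v‖_{X^{s,(1−δ)/2,1}}. -/

import Mathlib

/-!
Write `z = (τ, ξ, η)`, `σ = τ - ξ³ - η³` and `A = 1 + (ξ + η)² + |σ|`. The estimate is reduced to a
weighted `L²` estimate on the Fourier side, which follows from Cauchy-Schwarz and a change of
variables.

*Norms.* Since the cutoffs form a dyadic partition of unity with bounded overlap, the `X^{s,b,1}`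
norm dominates the `L²` norm of `ũ` with weight `⟨(ξ, η)⟩^s A^b` (`weighted_le_Xnorm`). In the
opposite direction the `ℓ¹` sum over `L` is handled by Cauchy-Schwarz at the price of a factor
`|σ|^ν + |σ|^{-ν}` in the squared weight (`Xnorm_le_weighted`).

*Fourier transform.* `F[(∂_x + ∂_y)(uv)]` is bounded by a constant times `|ξ + η| (|ũ| ∗ |ṽ|)`
(`ftt_dxdyProd_le`), by the convolution theorem for Schwartz functions.

*Kernel.* With `z = z₁ + z₂`, dividing the squared output weight by the two squared input weights
leaves a kernel bounded by
`(ξ + η)² (A A₁ A₂)^{-1+ν} (1 + |σ|^{-ν}) (⟨ζ₁⟩⟨ζ₂⟩/⟨ζ⟩)^{1-2ε}`, where `0 < ε ≤ s + 1/2`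
(`weight_le_QQ`). One may assume `|ξ₁ + η₁| ≥ |ξ₂ + η₂|`, so that both `A` and `A₁` dominate
`(ξ + η)²` and either of them can be spent on it. Let `m` be the size of the largest frequency.

* If `A₁` is spent, the remaining factors `A^{-1-ν} A₂^{-1-ν}` are integrated in `z` with `z₁`
  frozen: the change of variables `(τ, ξ) ↦ (σ, σ₂)` has Jacobian `3|ξ² - ξ₂²|`, and likewise for
  `η`. If one of these Jacobians is `≳ m²`, it compensates the growth of
  `(⟨ζ₁⟩⟨ζ₂⟩/⟨ζ⟩)^{1-2ε}`, and the surplus in powers of `⟨ζ⟩` integrates the remaining variable.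
* Otherwise `ξ² ≈ ξ₂²` and `η² ≈ η₂²`. Then `⟨ζ⟩ ∼ m`, and `ξ = ξ₁ + ξ₂` with `ξ` not small forces
  `|ξ₁² - ξ₂²| ≳ m²`, or the same for `η` (`transversal`). In this case `A` is spent, and
  `A₁^{-1-ν} A₂^{-1-ν}` is integrated in `z₁` with `z` frozen.

The powers of `m` lost to the exponents `ν` are covered by `ε`, as `401 ν ≤ 2ε`, as long as
`|σ| ≥ m^{-40}` and all modulations are at most a fixed power of `m`; outside this range, and for
bounded frequencies, a crude integrable bound suffices (`kerC`). Both types of kernel then give the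
weighted bilinear estimate through Cauchy-Schwarz (`test_inner`, `test_outer`,
`weighted_bilinear`).
-/

noncomputable section

open MeasureTheory
open scoped ENNReal

/-- Space-time Fourier transform `ũ(τ,ξ,η)` of a function `u(t,x,y)`. -/
def ftt (w : ℝ → ℝ → ℝ → ℂ) (τ ξ η : ℝ) : ℂ :=
  ∫ t : ℝ, ∫ x : ℝ, ∫ y : ℝ,
    Complex.exp (-Complex.I * ((t * τ + x * ξ + y * η : ℝ) : ℂ)) * w t x y

/-- `φ(t) = χ(t) - χ(2t)`. -/
def phiCut (χ : ℝ → ℝ) (t : ℝ) : ℝ := χ t - χ (2 * t)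

/-- `φ_N(t) = φ(t/N)`. -/
def phiCutD (χ : ℝ → ℝ) (N t : ℝ) : ℝ := phiCut χ (t / N)

/-- Japanese bracket `⟨x⟩ = (1+x²)^{1/2}` raised to the power `s`. -/
def jbr (x s : ℝ) : ℝ := (1 + x ^ 2) ^ (s / 2)

/-- The `L²_{t,x,y}` norm of the dyadic piece `P_{N,M} Q_L u`, computed on the
Fourier side via Plancherel's theorem: the multiplier is
`φ_N(|(ξ,η)|) φ_M(ξ+η) φ_L(τ-ξ³-η³)`. -/
def PQLnorm (χ : ℝ → ℝ) (N M L : ℝ) (w : ℝ → ℝ → ℝ → ℂ) : ℝ≥0∞ :=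
  (∫⁻ v : ℝ × ℝ × ℝ,
      ENNReal.ofReal
        ((phiCutD χ N (Real.sqrt (v.2.1 ^ 2 + v.2.2 ^ 2)) *
            phiCutD χ M (v.2.1 + v.2.2) *
            phiCutD χ L (v.1 - v.2.1 ^ 3 - v.2.2 ^ 3)) ^ 2 *
          ‖ftt w v.1 v.2.1 v.2.2‖ ^ 2)) ^ ((1 : ℝ) / 2)

/-- The Besov-type Bourgain norm
`‖u‖_{X^{s,b,1}} = { Σ_N Σ_M ( Σ_L ⟨N⟩^s ⟨M²+L⟩^b ‖P_{N,M}Q_L u‖_{L²} )² }^{1/2}`,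
all sums over dyadic numbers `N = 2ⁿ`, `M = 2ᵐ`, `L = 2ˡ`, `n, m, l ∈ ℤ`. -/
def Xnorm (χ : ℝ → ℝ) (s b : ℝ) (w : ℝ → ℝ → ℝ → ℂ) : ℝ≥0∞ :=
  (∑' n : ℤ, ∑' m : ℤ,
      (∑' l : ℤ,
          ENNReal.ofReal (jbr ((2 : ℝ) ^ n) s * jbr (((2 : ℝ) ^ m) ^ 2 + (2 : ℝ) ^ l) b) *
            PQLnorm χ ((2 : ℝ) ^ n) ((2 : ℝ) ^ m) ((2 : ℝ) ^ l) w) ^ 2) ^ ((1 : ℝ) / 2)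

/-- `(∂_x + ∂_y)(u v)` as a pointwise function of `(t,x,y)`. -/
def dxdyProd (u v : ℝ → ℝ → ℝ → ℂ) : ℝ → ℝ → ℝ → ℂ := fun t x y =>
  deriv (fun x' => u t x' y * v t x' y) x + deriv (fun y' => u t x y' * v t x y') y

/-! ### The dyadic cutoffs -/

/-- The standing assumptions on the cutoff `χ` that the size estimates use. -/
structure IsCut (χ : ℝ → ℝ) : Prop where
  cont : Continuous χ
  nonneg : ∀ t, 0 ≤ χ t
  le_one : ∀ t, χ t ≤ 1
  supp : Function.support χ ⊆ Set.Ioo (-2) 2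
  one : ∀ t ∈ Set.Icc (-1 : ℝ) 1, χ t = 1

namespace IsCut

variable {χ : ℝ → ℝ}

lemma eq_zero (h : IsCut χ) {t : ℝ} (ht : 2 ≤ |t|) : χ t = 0 := by
  by_contra hne
  have := h.supp (Function.mem_support.2 hne)
  rcases le_abs.1 ht with h1 | h1 <;> linarith [this.1, this.2]

lemma eq_one (h : IsCut χ) {t : ℝ} (ht : |t| ≤ 1) : χ t = 1 :=
  h.one t (abs_le.1 ht)

lemma phi_nonneg (h : IsCut χ) (t : ℝ) : 0 ≤ phiCut χ t := by
  unfold phiCut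
  rcases le_total (|t|) 1 with ht | ht
  · rw [h.eq_one ht]; linarith [h.le_one (2 * t)]
  · have : χ (2 * t) = 0 := h.eq_zero (by rw [abs_mul]; norm_num; linarith)
    rw [this]; linarith [h.nonneg t]

lemma phi_le_one (h : IsCut χ) (t : ℝ) : phiCut χ t ≤ 1 := by
  unfold phiCut; linarith [h.nonneg (2 * t), h.le_one t]

lemma phi_ne (h : IsCut χ) {t : ℝ} (ht : phiCut χ t ≠ 0) : 1 / 2 ≤ |t| ∧ |t| ≤ 2 := by
  constructor
  · by_contra! h1
    apply ht
    unfold phiCut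
    rw [h.eq_one (by linarith), h.eq_one (by rw [abs_mul]; norm_num; linarith), sub_self]
  · by_contra! h1
    apply ht
    unfold phiCut
    rw [h.eq_zero h1.le, h.eq_zero (by rw [abs_mul]; norm_num; linarith), sub_self]

/-- On the support of `φ_N` with `N = 2ⁿ` one has `|t| ∼ N`. -/
lemma phiD_ne (h : IsCut χ) {n : ℤ} {t : ℝ} (ht : phiCutD χ ((2 : ℝ) ^ n) t ≠ 0) :
    (2 : ℝ) ^ n ≤ 2 * |t| ∧ |t| ≤ 2 * (2 : ℝ) ^ n := by
  have hp : (0 : ℝ) < (2 : ℝ) ^ n := by positivity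
  obtain ⟨h1, h2⟩ := h.phi_ne ht
  rw [abs_div, abs_of_pos hp] at h1 h2
  rw [div_le_div_iff₀ (by norm_num) hp] at h1
  rw [div_le_iff₀ hp] at h2
  constructor <;> linarith

/-- A dyadic partition of unity: only two of the `φ_N(t)` can be nonzero, and they add up to `1`. -/
lemma exists_two (h : IsCut χ) {t : ℝ} (ht : t ≠ 0) : ∃ k : ℤ,
    (∀ n : ℤ, n ≠ k → n ≠ k + 1 → phiCutD χ ((2 : ℝ) ^ n) t = 0) ∧
    phiCutD χ ((2 : ℝ) ^ k) t + phiCutD χ ((2 : ℝ) ^ (k + 1)) t = 1 := by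
  obtain ⟨k, hk1, hk2⟩ := exists_mem_Ico_zpow (abs_pos.2 ht) (by norm_num : (1 : ℝ) < 2)
  have hdiv : ∀ n : ℤ, |t / (2 : ℝ) ^ n| = |t| / (2 : ℝ) ^ n := fun n => by
    rw [abs_div, abs_of_pos (by positivity : (0 : ℝ) < (2 : ℝ) ^ n)]
  have small : ∀ n : ℤ, k + 1 ≤ n → χ (t / (2 : ℝ) ^ n) = 1 := fun n hn => by
    apply h.eq_one
    rw [hdiv, div_le_one (by positivity)]
    exact hk2.le.trans (zpow_le_zpow_right₀ (by norm_num) hn)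
  have large : ∀ n : ℤ, n ≤ k - 1 → χ (t / (2 : ℝ) ^ n) = 0 := fun n hn => by
    apply h.eq_zero
    rw [hdiv, le_div_iff₀ (by positivity)]
    calc (2 : ℝ) * 2 ^ n = 2 ^ (n + 1) := by rw [zpow_add₀ (by norm_num)]; ring
      _ ≤ 2 ^ k := zpow_le_zpow_right₀ (by norm_num) (by omega)
      _ ≤ |t| := hk1
  have step : ∀ n : ℤ, phiCutD χ ((2 : ℝ) ^ n) t
      = χ (t / (2 : ℝ) ^ n) - χ (t / (2 : ℝ) ^ (n - 1)) := fun n => by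
    unfold phiCutD phiCut
    congr 2
    rw [zpow_sub_one₀ (by norm_num)]; field_simp
  refine ⟨k, fun n h1 h2 => ?_, ?_⟩
  · rw [step]
    rcases lt_or_gt_of_ne h1 with h3 | h3
    · rw [large n (by omega), large (n - 1) (by omega), sub_self]
    · rw [small n (by omega), small (n - 1) (by omega), sub_self]
  · rw [step, step, add_sub_cancel_right, small (k + 1) le_rfl, large (k - 1) le_rfl]; ring

lemma tsum_eq (h : IsCut χ) {t : ℝ} (ht : t ≠ 0) : ∃ a b : ℝ, 0 ≤ a ∧ 0 ≤ b ∧ a + b = 1 ∧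
    ∑' n : ℤ, ENNReal.ofReal (phiCutD χ ((2 : ℝ) ^ n) t ^ 2) = ENNReal.ofReal (a ^ 2 + b ^ 2) := by
  obtain ⟨k, hk, hs⟩ := h.exists_two ht
  refine ⟨_, _, h.phi_nonneg _, h.phi_nonneg _, hs, ?_⟩
  rw [tsum_eq_sum (s := {k, k + 1})]
  · rw [Finset.sum_pair (by omega), ENNReal.ofReal_add (by positivity) (by positivity)]
    rfl
  · intro n hn
    simp only [Finset.mem_insert, Finset.mem_singleton, not_or] at hn
    rw [hk n hn.1 hn.2]; simp

lemma tsum_le (h : IsCut χ) (t : ℝ) :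
    ∑' n : ℤ, ENNReal.ofReal (phiCutD χ ((2 : ℝ) ^ n) t ^ 2) ≤ 1 := by
  rcases eq_or_ne t 0 with rfl | ht
  · have : ∀ n : ℤ, phiCutD χ ((2 : ℝ) ^ n) 0 = 0 := fun n => by simp [phiCutD, phiCut]
    simp [this]
  · obtain ⟨a, b, ha, hb, hab, he⟩ := h.tsum_eq ht
    rw [he]
    exact ENNReal.ofReal_le_one.2 (by nlinarith)

lemma le_tsum (h : IsCut χ) {t : ℝ} (ht : t ≠ 0) :
    ENNReal.ofReal (1 / 2) ≤ ∑' n : ℤ, ENNReal.ofReal (phiCutD χ ((2 : ℝ) ^ n) t ^ 2) := by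
  obtain ⟨a, b, ha, hb, hab, he⟩ := h.tsum_eq ht
  rw [he]
  exact ENNReal.ofReal_le_ofReal (by nlinarith [sq_nonneg (a - b)])

lemma measurable_phiD (h : IsCut χ) (N : ℝ) : Measurable (phiCutD χ N) := by
  have := h.cont.measurable
  unfold phiCutD phiCut
  fun_prop

end IsCut

/-! ### Comparison of the Besov-type norms with weighted `L²` norms -/

/-- The modulation `σ = τ - ξ³ - η³` at the frequency `z = (τ, ξ, η)`. -/
def sg (z : ℝ × ℝ × ℝ) : ℝ := z.1 - z.2.1 ^ 3 - z.2.2 ^ 3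

/-- The dissipative direction `ξ + η`. -/
def pp (z : ℝ × ℝ × ℝ) : ℝ := z.2.1 + z.2.2

/-- `1 + |ξ| + |η|`, comparable to `⟨(ξ, η)⟩`. -/
def JJ (z : ℝ × ℝ × ℝ) : ℝ := 1 + |z.2.1| + |z.2.2|

/-- `1 + (ξ + η)² + |σ|`, comparable to `⟨M² + L⟩` on a dyadic block. -/
def AA (z : ℝ × ℝ × ℝ) : ℝ := 1 + pp z ^ 2 + |sg z|

/-- The square of the weight `⟨(ξ, η)⟩^s ⟨(ξ + η)² + |σ|⟩^b`, up to constants. -/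
def wt (s b : ℝ) (z : ℝ × ℝ × ℝ) : ℝ := (JJ z ^ 2) ^ s * (AA z ^ 2) ^ b

/-- `|σ|^ν + |σ|^{-ν}`, the price for turning the `ℓ¹` sum over `L` into an `ℓ²` sum. -/
def ww (ν : ℝ) (z : ℝ × ℝ × ℝ) : ℝ := |sg z| ^ ν + |sg z| ^ (-ν)

lemma JJ_ge_one (z : ℝ × ℝ × ℝ) : 1 ≤ JJ z := by
  unfold JJ; linarith [abs_nonneg z.2.1, abs_nonneg z.2.2]

lemma AA_ge_one (z : ℝ × ℝ × ℝ) : 1 ≤ AA z := by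
  unfold AA; linarith [sq_nonneg (pp z), abs_nonneg (sg z)]

lemma wt_pos (s b : ℝ) (z : ℝ × ℝ × ℝ) : 0 < wt s b z := by
  have := JJ_ge_one z
  have := AA_ge_one z
  unfold wt; positivity

lemma ww_nonneg (ν : ℝ) (z : ℝ × ℝ × ℝ) : 0 ≤ ww ν z := by
  unfold ww; positivity

@[fun_prop] lemma continuous_sg : Continuous sg := by unfold sg; fun_prop
@[fun_prop] lemma continuous_pp : Continuous pp := by unfold pp; fun_prop
@[fun_prop] lemma continuous_JJ : Continuous JJ := by unfold JJ; fun_prop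
@[fun_prop] lemma continuous_AA : Continuous AA := by unfold AA; fun_prop
@[fun_prop] lemma measurable_sg : Measurable sg := continuous_sg.measurable
@[fun_prop] lemma measurable_pp : Measurable pp := continuous_pp.measurable
@[fun_prop] lemma measurable_JJ : Measurable JJ := continuous_JJ.measurable
@[fun_prop] lemma measurable_AA : Measurable AA := continuous_AA.measurable
@[fun_prop] lemma measurable_wt (s b : ℝ) : Measurable (wt s b) := by unfold wt; fun_prop
@[fun_prop] lemma measurable_ww (ν : ℝ) : Measurable (ww ν) := by unfold ww; fun_prop

lemma rpow_comp {x y c : ℝ} (hx : 0 < x) (hy : 0 < y) (hc : 1 ≤ c) (h1 : x ≤ c * y)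
    (h2 : y ≤ c * x) (r : ℝ) : x ^ r ≤ c ^ |r| * y ^ r := by
  have hc0 : 0 < c := by linarith
  rcases le_total 0 r with hr | hr
  · rw [abs_of_nonneg hr, ← Real.mul_rpow hc0.le hy.le]
    exact Real.rpow_le_rpow hx.le h1 hr
  · rw [abs_of_nonpos hr]
    have h3 : (c * x) ^ r ≤ y ^ r := Real.rpow_le_rpow_of_nonpos hy h2 hr
    rw [Real.mul_rpow hc0.le hx.le] at h3
    calc x ^ r = c ^ (-r) * (c ^ r * x ^ r) := by
          rw [← mul_assoc, ← Real.rpow_add hc0]; simp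
      _ ≤ c ^ (-r) * y ^ r := by gcongr

lemma jbr_sq (x s : ℝ) : jbr x s ^ 2 = (1 + x ^ 2) ^ s := by
  unfold jbr
  rw [← Real.rpow_natCast, ← Real.rpow_mul (by positivity)]
  congr 1; push_cast; ring

/-- The multiplier `φ_N(|(ξ, η)|) φ_M(ξ + η) φ_L(σ)`. -/
def mult (χ : ℝ → ℝ) (n m l : ℤ) (z : ℝ × ℝ × ℝ) : ℝ :=
  phiCutD χ ((2 : ℝ) ^ n) (Real.sqrt (z.2.1 ^ 2 + z.2.2 ^ 2)) *
    phiCutD χ ((2 : ℝ) ^ m) (z.2.1 + z.2.2) *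
    phiCutD χ ((2 : ℝ) ^ l) (z.1 - z.2.1 ^ 3 - z.2.2 ^ 3)

/-- The square of the coefficient of a dyadic block in `Xnorm`. -/
def coefSq (s b : ℝ) (n m l : ℤ) : ℝ :=
  (jbr ((2 : ℝ) ^ n) s * jbr (((2 : ℝ) ^ m) ^ 2 + (2 : ℝ) ^ l) b) ^ 2

lemma coef_comp {χ : ℝ → ℝ} (h : IsCut χ) (s b : ℝ) (n m l : ℤ) (z : ℝ × ℝ × ℝ)
    (hz : mult χ n m l z ≠ 0) :
    coefSq s b n m l ≤ 12 ^ |s| * 32 ^ |b| * wt s b z ∧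
    wt s b z ≤ 12 ^ |s| * 32 ^ |b| * coefSq s b n m l := by
  unfold mult at hz
  have hz1 := left_ne_zero_of_mul (left_ne_zero_of_mul hz)
  have hz2 := right_ne_zero_of_mul (left_ne_zero_of_mul hz)
  have hz3 := right_ne_zero_of_mul hz
  obtain ⟨a1, a2⟩ := h.phiD_ne hz1
  obtain ⟨b1, b2⟩ := h.phiD_ne hz2
  obtain ⟨c1, c2⟩ := h.phiD_ne hz3
  have hN : (0 : ℝ) < (2 : ℝ) ^ n := by positivity
  have hM : (0 : ℝ) < (2 : ℝ) ^ m := by positivity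
  have hL : (0 : ℝ) < (2 : ℝ) ^ l := by positivity
  have e1 : |Real.sqrt (z.2.1 ^ 2 + z.2.2 ^ 2)| ^ 2 = z.2.1 ^ 2 + z.2.2 ^ 2 := by
    rw [sq_abs, Real.sq_sqrt (by positivity)]
  have e2 : |z.2.1 + z.2.2| ^ 2 = pp z ^ 2 := by rw [sq_abs]; rfl
  change (2 : ℝ) ^ l ≤ 2 * |sg z| at c1
  change |sg z| ≤ 2 * (2 : ℝ) ^ l at c2
  have hx := abs_nonneg z.2.1
  have hy := abs_nonneg z.2.2
  have hx2 := sq_abs z.2.1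
  have hy2 := sq_abs z.2.2
  have n1 : ((2 : ℝ) ^ n) ^ 2 ≤ 4 * (z.2.1 ^ 2 + z.2.2 ^ 2) := by
    rw [← e1]; nlinarith
  have n2 : (z.2.1 ^ 2 + z.2.2 ^ 2) ≤ 4 * ((2 : ℝ) ^ n) ^ 2 := by
    rw [← e1]; nlinarith [abs_nonneg (Real.sqrt (z.2.1 ^ 2 + z.2.2 ^ 2))]
  have m1 : ((2 : ℝ) ^ m) ^ 2 ≤ 4 * pp z ^ 2 := by
    rw [← e2]; nlinarith
  have m2 : pp z ^ 2 ≤ 4 * ((2 : ℝ) ^ m) ^ 2 := by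
    rw [← e2]; nlinarith [abs_nonneg (z.2.1 + z.2.2)]
  have J1 : 1 + ((2 : ℝ) ^ n) ^ 2 ≤ 12 * JJ z ^ 2 := by
    unfold JJ; nlinarith [mul_nonneg hx hy]
  have J2 : JJ z ^ 2 ≤ 12 * (1 + ((2 : ℝ) ^ n) ^ 2) := by
    unfold JJ
    nlinarith [sq_nonneg (|z.2.1| - |z.2.2|), sq_nonneg (|z.2.1| - 1), sq_nonneg (|z.2.2| - 1)]
  have A1 : 1 + (((2 : ℝ) ^ m) ^ 2 + (2 : ℝ) ^ l) ^ 2 ≤ 32 * AA z ^ 2 := by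
    have hs : 0 ≤ ((2 : ℝ) ^ m) ^ 2 + (2 : ℝ) ^ l := by positivity
    have : ((2 : ℝ) ^ m) ^ 2 + (2 : ℝ) ^ l ≤ 4 * (AA z - 1) := by unfold AA; linarith
    nlinarith [AA_ge_one z]
  have A2 : AA z ^ 2 ≤ 32 * (1 + (((2 : ℝ) ^ m) ^ 2 + (2 : ℝ) ^ l) ^ 2) := by
    have hs : 0 ≤ ((2 : ℝ) ^ m) ^ 2 + (2 : ℝ) ^ l := by positivity
    have : AA z - 1 ≤ 4 * (((2 : ℝ) ^ m) ^ 2 + (2 : ℝ) ^ l) := by unfold AA; linarith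
    nlinarith [AA_ge_one z, sq_nonneg (((2 : ℝ) ^ m) ^ 2 + (2 : ℝ) ^ l - 1)]
  have hJ := JJ_ge_one z
  have hA := AA_ge_one z
  have hJ0 : 0 < JJ z ^ 2 := by positivity
  have hA0 : 0 < AA z ^ 2 := by positivity
  have hN0 : 0 < 1 + ((2 : ℝ) ^ n) ^ 2 := by positivity
  have hM0 : 0 < 1 + (((2 : ℝ) ^ m) ^ 2 + (2 : ℝ) ^ l) ^ 2 := by positivity
  have k1 := rpow_comp hN0 hJ0 (by norm_num) J1 J2 s
  have k2 := rpow_comp hJ0 hN0 (by norm_num) J2 J1 s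
  have k3 := rpow_comp hM0 hA0 (by norm_num) A1 A2 b
  have k4 := rpow_comp hA0 hM0 (by norm_num) A2 A1 b
  unfold coefSq wt
  rw [mul_pow, jbr_sq, jbr_sq]
  constructor
  · calc _ ≤ (12 ^ |s| * (JJ z ^ 2) ^ s) * (32 ^ |b| * (AA z ^ 2) ^ b) := by gcongr
      _ = _ := by ring
  · calc _ ≤ (12 ^ |s| * (1 + ((2 : ℝ) ^ n) ^ 2) ^ s) *
          (32 ^ |b| * (1 + (((2 : ℝ) ^ m) ^ 2 + (2 : ℝ) ^ l) ^ 2) ^ b) := by gcongr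
      _ = _ := by ring

/-- The density whose integral is the squared `L²` norm of a dyadic block. -/
def blockSq (χ : ℝ → ℝ) (n m l : ℤ) (w : ℝ → ℝ → ℝ → ℂ) (z : ℝ × ℝ × ℝ) : ℝ≥0∞ :=
  ENNReal.ofReal (mult χ n m l z ^ 2 * ‖ftt w z.1 z.2.1 z.2.2‖ ^ 2)

lemma half_sq (x : ℝ≥0∞) : (x ^ ((1 : ℝ) / 2)) ^ 2 = x := by
  rw [← ENNReal.rpow_natCast, ← ENNReal.rpow_mul]; simp

lemma PQL_sq (χ : ℝ → ℝ) (n m l : ℤ) (w : ℝ → ℝ → ℝ → ℂ) :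
    PQLnorm χ ((2 : ℝ) ^ n) ((2 : ℝ) ^ m) ((2 : ℝ) ^ l) w ^ 2 = ∫⁻ z, blockSq χ n m l w z := by
  unfold PQLnorm; rw [half_sq]; rfl

lemma Xnorm_sq (χ : ℝ → ℝ) (s b : ℝ) (w : ℝ → ℝ → ℝ → ℂ) :
    Xnorm χ s b w ^ 2 = ∑' n : ℤ, ∑' m : ℤ,
      (∑' l : ℤ,
          ENNReal.ofReal (jbr ((2 : ℝ) ^ n) s * jbr (((2 : ℝ) ^ m) ^ 2 + (2 : ℝ) ^ l) b) *
            PQLnorm χ ((2 : ℝ) ^ n) ((2 : ℝ) ^ m) ((2 : ℝ) ^ l) w) ^ 2 := by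
  unfold Xnorm; rw [half_sq]

lemma measurable_mult {χ : ℝ → ℝ} (h : IsCut χ) (n m l : ℤ) : Measurable (mult χ n m l) := by
  have h1 := h.measurable_phiD ((2 : ℝ) ^ n)
  have h2 := h.measurable_phiD ((2 : ℝ) ^ m)
  have h3 := h.measurable_phiD ((2 : ℝ) ^ l)
  unfold mult
  fun_prop

lemma measurable_block {χ : ℝ → ℝ} (h : IsCut χ) (n m l : ℤ) {w : ℝ → ℝ → ℝ → ℂ}
    (hw : Measurable fun z : ℝ × ℝ × ℝ => ftt w z.1 z.2.1 z.2.2) :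
    Measurable (blockSq χ n m l w) := by
  have := measurable_mult h n m l
  unfold blockSq
  fun_prop

lemma tsum_mult (χ : ℝ → ℝ) (z : ℝ × ℝ × ℝ) :
    ∑' n : ℤ, ∑' m : ℤ, ∑' l : ℤ, ENNReal.ofReal (mult χ n m l z ^ 2) =
      (∑' n : ℤ, ENNReal.ofReal
        (phiCutD χ ((2 : ℝ) ^ n) (Real.sqrt (z.2.1 ^ 2 + z.2.2 ^ 2)) ^ 2)) *
      (∑' m : ℤ, ENNReal.ofReal (phiCutD χ ((2 : ℝ) ^ m) (pp z) ^ 2)) *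
      (∑' l : ℤ, ENNReal.ofReal (phiCutD χ ((2 : ℝ) ^ l) (sg z) ^ 2)) := by
  rw [mul_assoc, ← ENNReal.tsum_mul_right]
  congr 1; ext n
  rw [← ENNReal.tsum_mul_right, ← ENNReal.tsum_mul_left]
  congr 1; ext m
  rw [← ENNReal.tsum_mul_left, ← ENNReal.tsum_mul_left]
  congr 1; ext l
  rw [← ENNReal.ofReal_mul (by positivity), ← ENNReal.ofReal_mul (by positivity)]
  congr 1
  unfold mult pp sg; ring

lemma tsum_mult_le {χ : ℝ → ℝ} (h : IsCut χ) (z : ℝ × ℝ × ℝ) :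
    ∑' n : ℤ, ∑' m : ℤ, ∑' l : ℤ, ENNReal.ofReal (mult χ n m l z ^ 2) ≤ 1 := by
  rw [tsum_mult]
  calc _ ≤ (1 : ℝ≥0∞) * 1 * 1 := by gcongr <;> exact h.tsum_le _
    _ = 1 := by simp

lemma le_tsum_mult {χ : ℝ → ℝ} (h : IsCut χ) {z : ℝ × ℝ × ℝ} (hp : pp z ≠ 0) (hs : sg z ≠ 0) :
    ENNReal.ofReal (1 / 8) ≤
      ∑' n : ℤ, ∑' m : ℤ, ∑' l : ℤ, ENNReal.ofReal (mult χ n m l z ^ 2) := by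
  have hz : Real.sqrt (z.2.1 ^ 2 + z.2.2 ^ 2) ≠ 0 := by
    rw [Ne, Real.sqrt_eq_zero (by positivity)]
    intro h0
    apply hp
    have h1 : z.2.1 ^ 2 = 0 := by nlinarith [sq_nonneg z.2.1, sq_nonneg z.2.2]
    have h2 : z.2.2 ^ 2 = 0 := by nlinarith [sq_nonneg z.2.1, sq_nonneg z.2.2]
    unfold pp
    rw [pow_eq_zero_iff (by norm_num)] at h1 h2
    rw [h1, h2, add_zero]
  rw [tsum_mult]
  calc ENNReal.ofReal (1 / 8)
      = ENNReal.ofReal (1 / 2) * ENNReal.ofReal (1 / 2) * ENNReal.ofReal (1 / 2) := by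
        rw [← ENNReal.ofReal_mul (by norm_num), ← ENNReal.ofReal_mul (by norm_num)]; norm_num
    _ ≤ _ := by
        gcongr
        · exact h.le_tsum hz
        · exact h.le_tsum hp
        · exact h.le_tsum hs

lemma ae_ne : ∀ᵐ z : ℝ × ℝ × ℝ, pp z ≠ 0 ∧ sg z ≠ 0 := by
  have hne : ∀ c : ℝ, ∀ᵐ t : ℝ, t ≠ c := fun c => by
    simp [ae_iff]
  rw [Filter.eventually_and]
  constructor
  · have hm : MeasurableSet {z : ℝ × ℝ × ℝ | pp z ≠ 0} :=
      (measurable_pp (measurableSet_singleton 0)).compl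
    refine (Measure.ae_prod_iff_ae_ae hm).2 (ae_of_all _ fun t => ?_)
    have hm2 : MeasurableSet {v : ℝ × ℝ | pp (t, v) ≠ 0} :=
      (measurable_pp.comp measurable_prodMk_left (measurableSet_singleton 0)).compl
    refine (Measure.ae_prod_iff_ae_ae hm2).2 (ae_of_all _ fun x => ?_)
    filter_upwards [hne (-x)] with y hy h0
    exact hy (by simp only [pp] at h0; linarith)
  · have hm : MeasurableSet {z : ℝ × ℝ × ℝ | sg z ≠ 0} :=
      (measurable_sg (measurableSet_singleton 0)).compl
    rw [ae_iff]
    have h0 : {z : ℝ × ℝ × ℝ | ¬ sg z ≠ 0} = {z | sg z ≠ 0}ᶜ := rfl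
    rw [h0, ← lintegral_indicator_one hm.compl]
    change ∫⁻ z, _ ∂((volume : Measure ℝ).prod volume) = 0
    rw [lintegral_prod_symm _ ((measurable_one.indicator hm.compl).aemeasurable)]
    rw [lintegral_eq_zero_iff' (by
      exact ((measurable_one.indicator hm.compl).lintegral_prod_left').aemeasurable)]
    refine ae_of_all _ fun v => ?_
    simp only [Pi.zero_apply]
    rw [lintegral_eq_zero_iff' (by
      exact ((measurable_one.indicator hm.compl).comp measurable_prodMk_right).aemeasurable)]
    filter_upwards [hne (v.1 ^ 3 + v.2 ^ 3)] with t ht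
    simp only [Pi.zero_apply, Set.indicator_apply_eq_zero, Set.mem_compl_iff, Set.mem_ofPred_eq,
      not_not, Pi.one_apply, one_ne_zero, imp_false]
    intro h1
    exact ht (by simp only [sg] at h1; linarith)

lemma tsum_sq_le (a : ℤ → ℝ≥0∞) : ∑' l, a l ^ 2 ≤ (∑' l, a l) ^ 2 := by
  rw [sq (∑' l, a l), ← ENNReal.tsum_mul_right]
  refine ENNReal.tsum_le_tsum fun l => ?_
  rw [sq]
  gcongr
  exact ENNReal.le_tsum l

/-- The Besov-type norm controls the corresponding weighted `L²` norm. -/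
lemma weighted_le_Xnorm {χ : ℝ → ℝ} (h : IsCut χ) (s b : ℝ) {w : ℝ → ℝ → ℝ → ℂ}
    (hw : Measurable fun z : ℝ × ℝ × ℝ => ftt w z.1 z.2.1 z.2.2) :
    ∫⁻ z, ENNReal.ofReal (wt s b z * ‖ftt w z.1 z.2.1 z.2.2‖ ^ 2) ≤
      ENNReal.ofReal (8 * (12 ^ |s| * 32 ^ |b|)) * Xnorm χ s b w ^ 2 := by
  set K : ℝ := 12 ^ |s| * 32 ^ |b| with hK
  have hK0 : 0 ≤ K := by positivity
  have pt : ∀ᵐ z : ℝ × ℝ × ℝ, ENNReal.ofReal (wt s b z * ‖ftt w z.1 z.2.1 z.2.2‖ ^ 2) ≤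
      ∑' n : ℤ, ∑' m : ℤ, ∑' l : ℤ,
        ENNReal.ofReal (8 * K) * (ENNReal.ofReal (coefSq s b n m l) * blockSq χ n m l w z) := by
    filter_upwards [ae_ne] with z hz
    set y := ‖ftt w z.1 z.2.1 z.2.2‖ ^ 2 with hy
    have hy0 : 0 ≤ y := by positivity
    have h1 := le_tsum_mult h hz.1 hz.2
    calc ENNReal.ofReal (wt s b z * y)
        = ENNReal.ofReal (1 / 8) * ENNReal.ofReal (8 * (wt s b z * y)) := by
          rw [← ENNReal.ofReal_mul (by norm_num)]; congr 1; ring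
      _ ≤ (∑' n : ℤ, ∑' m : ℤ, ∑' l : ℤ, ENNReal.ofReal (mult χ n m l z ^ 2)) *
            ENNReal.ofReal (8 * (wt s b z * y)) := by gcongr
      _ ≤ _ := by
        simp only [← ENNReal.tsum_mul_right]
        refine ENNReal.tsum_le_tsum fun n => ENNReal.tsum_le_tsum fun m =>
          ENNReal.tsum_le_tsum fun l => ?_
        unfold blockSq
        have hwt := (wt_pos s b z).le
        rw [← ENNReal.ofReal_mul (by positivity), ← ENNReal.ofReal_mul (by unfold coefSq; positivity),
          ← ENNReal.ofReal_mul (by positivity)]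
        apply ENNReal.ofReal_le_ofReal
        rcases eq_or_ne (mult χ n m l z) 0 with h0 | h0
        · rw [h0]; simp
        · have := (coef_comp h s b n m l z h0).2
          calc mult χ n m l z ^ 2 * (8 * (wt s b z * y))
              ≤ mult χ n m l z ^ 2 * (8 * ((K * coefSq s b n m l) * y)) := by gcongr
            _ = _ := by ring
  refine (lintegral_mono_ae pt).trans ?_
  have mb : ∀ n m l : ℤ, Measurable (blockSq χ n m l w) := fun n m l => measurable_block h n m l hw
  rw [lintegral_tsum fun n => by fun_prop, Xnorm_sq, ← ENNReal.tsum_mul_left]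
  refine ENNReal.tsum_le_tsum fun n => ?_
  rw [lintegral_tsum fun m => by fun_prop, ← ENNReal.tsum_mul_left]
  refine ENNReal.tsum_le_tsum fun m => ?_
  rw [lintegral_tsum fun l => by fun_prop]
  refine le_trans ?_ (mul_le_mul_right (tsum_sq_le _) _)
  rw [← ENNReal.tsum_mul_left]
  refine ENNReal.tsum_le_tsum fun l => ?_
  rw [lintegral_const_mul _ (by fun_prop), lintegral_const_mul _ (by fun_prop), mul_pow, PQL_sq,
    coefSq, ENNReal.ofReal_pow]
  unfold jbr; positivity

lemma tsum_cs (a b : ℤ → ℝ≥0∞) : (∑' l, a l * b l) ^ 2 ≤ (∑' l, a l ^ 2) * ∑' l, b l ^ 2 := by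
  have := ENNReal.lintegral_mul_le_Lp_mul_Lq (Measure.count : Measure ℤ)
    Real.HolderConjugate.two_two (f := a) (g := b)
    (Measurable.of_discrete).aemeasurable (Measurable.of_discrete).aemeasurable
  simp only [lintegral_count, Pi.mul_apply] at this
  calc _ ≤ ((∑' l, a l ^ (2 : ℝ)) ^ ((1 : ℝ) / 2) * (∑' l, b l ^ (2 : ℝ)) ^ ((1 : ℝ) / 2)) ^ 2 := by
        gcongr
    _ = _ := by
        rw [mul_pow, half_sq, half_sq]
        simp only [ENNReal.rpow_two]

/-- The `ℓ¹` sum over `L` of the output norm costs an arbitrarily small power `|σ|^{±ν}`. -/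
lemma Xnorm_le_weighted {χ : ℝ → ℝ} (h : IsCut χ) (s b : ℝ) {ν : ℝ} (hν : 0 < ν) :
    ∃ C : ℝ, 0 < C ∧ ∀ w : ℝ → ℝ → ℝ → ℂ,
    (Measurable fun z : ℝ × ℝ × ℝ => ftt w z.1 z.2.1 z.2.2) →
      Xnorm χ s b w ^ 2 ≤
      ENNReal.ofReal C * ∫⁻ z, ENNReal.ofReal (wt s b z * ww ν z * ‖ftt w z.1 z.2.1 z.2.2‖ ^ 2) := by
  set K : ℝ := 12 ^ |s| * 32 ^ |b| with hK
  have hK0 : 0 < K := by positivity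
  set G : ℤ → ℝ := fun l => (2 : ℝ) ^ (-(ν / 2) * |(l : ℝ)|) with hG
  have hGpos : ∀ l, 0 < G l := fun l => by rw [hG]; positivity
  have hGsum : Summable fun l => G l ^ 2 := by
    have e : ∀ l : ℤ, G l ^ 2 = ((2 : ℝ) ^ (-ν)) ^ l.natAbs := fun l => by
      rw [hG]
      simp only
      rw [← Real.rpow_natCast, ← Real.rpow_mul (by norm_num), ← Real.rpow_natCast,
        ← Real.rpow_mul (by norm_num)]
      congr 1
      rw [Nat.cast_natAbs, Int.cast_abs]; push_cast; ring
    simp only [e]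
    have hr : Summable fun n : ℕ => ((2 : ℝ) ^ (-ν)) ^ n :=
      summable_geometric_of_lt_one (by positivity)
        (Real.rpow_lt_one_of_one_lt_of_neg (by norm_num) (by linarith))
    exact Summable.of_nat_of_neg (by simpa using hr) (by simpa using hr)
  set S : ℝ := ∑' l, G l ^ 2 with hS
  have hS0 : 0 ≤ S := tsum_nonneg fun l => by positivity
  refine ⟨(S + 1) * (K * (2 : ℝ) ^ ν), by positivity, fun w hw => ?_⟩
  have mb : ∀ n m l : ℤ, Measurable (blockSq χ n m l w) := fun n m l => measurable_block h n m l hw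
  have key : ∀ n m l z, ENNReal.ofReal ((G l ^ 2)⁻¹ * coefSq s b n m l) * blockSq χ n m l w z ≤
      ENNReal.ofReal (mult χ n m l z ^ 2) * ENNReal.ofReal (K * (2 : ℝ) ^ ν) *
        ENNReal.ofReal (wt s b z * ww ν z * ‖ftt w z.1 z.2.1 z.2.2‖ ^ 2) := by
    intro n m l z
    have hwt := (wt_pos s b z).le
    have hww := ww_nonneg ν z
    have hc : 0 ≤ coefSq s b n m l := by unfold coefSq; positivity
    unfold blockSq
    have := hGpos l
    rw [← ENNReal.ofReal_mul (by positivity), ← ENNReal.ofReal_mul (by positivity),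
      ← ENNReal.ofReal_mul (by positivity)]
    apply ENNReal.ofReal_le_ofReal
    set y := ‖ftt w z.1 z.2.1 z.2.2‖ ^ 2 with hy
    have hy0 : 0 ≤ y := by positivity
    rcases eq_or_ne (mult χ n m l z) 0 with h0 | h0
    · rw [h0]; simp
    · have h1 := (coef_comp h s b n m l z h0).1
      have h2 : (G l ^ 2)⁻¹ ≤ (2 : ℝ) ^ ν * ww ν z := by
        obtain ⟨c1, c2⟩ := h.phiD_ne (right_ne_zero_of_mul h0)
        change (2 : ℝ) ^ l ≤ 2 * |sg z| at c1
        change |sg z| ≤ 2 * (2 : ℝ) ^ l at c2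
        have hL : (0 : ℝ) < (2 : ℝ) ^ l := by positivity
        have hsg : 0 < |sg z| := by linarith
        have e : (G l ^ 2)⁻¹ = (2 : ℝ) ^ (ν * |(l : ℝ)|) := by
          rw [hG]
          simp only
          rw [← Real.rpow_natCast, ← Real.rpow_mul (by norm_num), ← Real.rpow_neg (by norm_num)]
          congr 1; push_cast; ring
        have e2 : ∀ r : ℝ, (2 : ℝ) ^ (r * (l : ℝ)) = ((2 : ℝ) ^ l) ^ r := fun r => by
          rw [mul_comm, Real.rpow_mul (by norm_num), Real.rpow_intCast]
        rw [e]
        unfold ww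
        have p1 : 0 ≤ |sg z| ^ ν := by positivity
        have p2 : 0 ≤ |sg z| ^ (-ν) := by positivity
        have p3 : 0 < (2 : ℝ) ^ ν := by positivity
        rcases le_total 0 (l : ℝ) with hl | hl
        · rw [abs_of_nonneg hl, e2]
          have := rpow_comp hL hsg (by norm_num) c1 c2 ν
          rw [abs_of_pos hν] at this
          nlinarith
        · rw [abs_of_nonpos hl, mul_neg, ← neg_mul, e2]
          have := rpow_comp hL hsg (by norm_num) c1 c2 (-ν)
          rw [abs_neg, abs_of_pos hν] at this
          nlinarith
      calc (G l ^ 2)⁻¹ * coefSq s b n m l * (mult χ n m l z ^ 2 * y)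
          ≤ ((2 : ℝ) ^ ν * ww ν z) * (K * wt s b z) * (mult χ n m l z ^ 2 * y) := by gcongr
        _ = _ := by ring
  have step : ∀ n m : ℤ, (∑' l : ℤ,
          ENNReal.ofReal (jbr ((2 : ℝ) ^ n) s * jbr (((2 : ℝ) ^ m) ^ 2 + (2 : ℝ) ^ l) b) *
            PQLnorm χ ((2 : ℝ) ^ n) ((2 : ℝ) ^ m) ((2 : ℝ) ^ l) w) ^ 2 ≤
      ENNReal.ofReal S * ∫⁻ z, ∑' l : ℤ,
        ENNReal.ofReal ((G l ^ 2)⁻¹ * coefSq s b n m l) * blockSq χ n m l w z := by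
    intro n m
    have hj : ∀ l : ℤ, 0 ≤ jbr ((2 : ℝ) ^ n) s * jbr (((2 : ℝ) ^ m) ^ 2 + (2 : ℝ) ^ l) b :=
      fun l => by unfold jbr; positivity
    have := tsum_cs (fun l => ENNReal.ofReal (G l)) (fun l => ENNReal.ofReal ((G l)⁻¹ *
      (jbr ((2 : ℝ) ^ n) s * jbr (((2 : ℝ) ^ m) ^ 2 + (2 : ℝ) ^ l) b)) *
            PQLnorm χ ((2 : ℝ) ^ n) ((2 : ℝ) ^ m) ((2 : ℝ) ^ l) w)
    refine le_trans (le_of_eq ?_) (this.trans (le_of_eq ?_))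
    · congr 2; ext l
      rw [← mul_assoc, ← ENNReal.ofReal_mul (hGpos l).le, mul_inv_cancel_left₀ (hGpos l).ne']
    · rw [lintegral_tsum fun l => by fun_prop]
      congr 1
      · rw [hS, ENNReal.ofReal_tsum_of_nonneg (fun l => by positivity) hGsum]
        congr 1; ext l
        rw [ENNReal.ofReal_pow (hGpos l).le]
      · congr 1; ext l
        rw [lintegral_const_mul _ (by fun_prop), mul_pow, PQL_sq, ← ENNReal.ofReal_pow, mul_pow,
          inv_pow]
        · rfl
        · exact mul_nonneg (inv_nonneg.2 (hGpos l).le) (hj l)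
  rw [Xnorm_sq]
  calc _ ≤ ∑' n : ℤ, ∑' m : ℤ, ENNReal.ofReal S * ∫⁻ z, ∑' l : ℤ,
        ENNReal.ofReal ((G l ^ 2)⁻¹ * coefSq s b n m l) * blockSq χ n m l w z :=
        ENNReal.tsum_le_tsum fun n => ENNReal.tsum_le_tsum fun m => step n m
    _ = ENNReal.ofReal S * ∫⁻ z, ∑' n : ℤ, ∑' m : ℤ, ∑' l : ℤ,
        ENNReal.ofReal ((G l ^ 2)⁻¹ * coefSq s b n m l) * blockSq χ n m l w z := by
        simp only [ENNReal.tsum_mul_left]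
        congr 1
        rw [lintegral_tsum fun n => by fun_prop]
        congr 1; ext n
        rw [lintegral_tsum fun n => by fun_prop]
    _ ≤ ENNReal.ofReal (S + 1) * ∫⁻ z, ENNReal.ofReal (K * (2 : ℝ) ^ ν) *
        ENNReal.ofReal (wt s b z * ww ν z * ‖ftt w z.1 z.2.1 z.2.2‖ ^ 2) := by
        gcongr with z
        · linarith
        · calc _ ≤ ∑' n : ℤ, ∑' m : ℤ, ∑' l : ℤ,
                ENNReal.ofReal (mult χ n m l z ^ 2) * ENNReal.ofReal (K * (2 : ℝ) ^ ν) *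
                ENNReal.ofReal (wt s b z * ww ν z * ‖ftt w z.1 z.2.1 z.2.2‖ ^ 2) :=
                ENNReal.tsum_le_tsum fun n => ENNReal.tsum_le_tsum fun m =>
                  ENNReal.tsum_le_tsum fun l => key n m l z
            _ = (∑' n : ℤ, ∑' m : ℤ, ∑' l : ℤ, ENNReal.ofReal (mult χ n m l z ^ 2)) *
                (ENNReal.ofReal (K * (2 : ℝ) ^ ν) *
                ENNReal.ofReal (wt s b z * ww ν z * ‖ftt w z.1 z.2.1 z.2.2‖ ^ 2)) := by
                simp only [mul_assoc, ENNReal.tsum_mul_right]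
            _ ≤ _ := by
                refine (mul_le_mul_left (tsum_mult_le h z) _).trans ?_
                rw [one_mul]
    _ = _ := by
        rw [lintegral_const_mul _ (by fun_prop), ← mul_assoc, ← ENNReal.ofReal_mul (by positivity)]

/-! ### Integral bounds -/

/-- The integrable profile `(1 + |x|)^{-r}`, as an extended nonnegative function. -/
def gg (r x : ℝ) : ℝ≥0∞ := ENNReal.ofReal ((1 + |x|) ^ (-r))

/-- The locally integrable singularity `|x|^{-1/2}` near the origin. -/
def kk (x : ℝ) : ℝ≥0∞ := (Set.Icc (-1 : ℝ) 1).indicator (fun x => ENNReal.ofReal (|x| ^ (-(1 / 2) : ℝ))) x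

@[fun_prop] lemma measurable_gg (r : ℝ) : Measurable (gg r) := by unfold gg; fun_prop

@[fun_prop] lemma measurable_kk : Measurable kk := by
  unfold kk
  exact Measurable.indicator (by fun_prop) measurableSet_Icc

lemma gg_neg (r x : ℝ) : gg r (-x) = gg r x := by unfold gg; rw [abs_neg]

lemma gg_lt_top {r : ℝ} (hr : 1 < r) : ∫⁻ x, gg r x < ∞ := by
  have h : Integrable (fun x : ℝ => (1 + ‖x‖) ^ (-r)) volume :=
    integrable_one_add_norm (by simpa using hr)
  have := h.lintegral_lt_top
  simpa [gg, Real.norm_eq_abs] using this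

lemma kk_lt_top : ∫⁻ x, kk x < ∞ := by
  unfold kk
  rw [lintegral_indicator measurableSet_Icc]
  have h1 : IntervalIntegrable (fun x : ℝ => |x| ^ (-(1 / 2) : ℝ)) volume 0 1 := by
    refine (intervalIntegral.intervalIntegrable_rpow' (r := -(1 / 2)) (by norm_num)).congr ?_
    intro x hx
    rw [Set.uIoc_of_le (by norm_num)] at hx
    simp only [abs_of_pos hx.1]
  have h2 : IntervalIntegrable (fun x : ℝ => |x| ^ (-(1 / 2) : ℝ)) volume (-1) 0 := by
    have := h1.symm
    rw [← neg_zero, IntervalIntegrable.iff_comp_neg]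
    simpa using this
  have h3 := h2.trans h1
  rw [intervalIntegrable_iff_integrableOn_Icc_of_le (by norm_num)] at h3
  exact h3.lintegral_lt_top

/-- Change of variables along a quadratic polynomial, which is injective on each side of its
vertex. -/
lemma lintegral_quadratic (c d : ℝ) (G : ℝ → ℝ≥0∞) :
    ∫⁻ x, ENNReal.ofReal |x ^ 2 - (x - c) ^ 2| * G (3 * c * x ^ 2 - 3 * c ^ 2 * x + d) ≤
      2 * ∫⁻ x, G x := by
  rcases eq_or_ne c 0 with rfl | hc
  · simp
  set f : ℝ → ℝ := fun x => 3 * c * x ^ 2 - 3 * c ^ 2 * x + d with hf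
  set f' : ℝ → ℝ := fun x => 3 * (x ^ 2 - (x - c) ^ 2) with hf'
  have hd : ∀ x, HasDerivAt f (f' x) x := fun x => by
    have : HasDerivAt f (3 * c * (2 * x) - 3 * c ^ 2 * 1) x := by
      have h1 := ((hasDerivAt_pow 2 x).const_mul (3 * c))
      have h2 := ((hasDerivAt_id x).const_mul (3 * c ^ 2))
      have := (h1.sub h2).add_const d
      simpa [hf] using this
    convert this using 1
    rw [hf']; ring
  have hdiff : ∀ x y, f x = f y → (x - y) * (x + y - c) = 0 := fun x y hxy => by
    have : 3 * c * ((x - y) * (x + y - c)) = 0 := by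
      rw [hf] at hxy; simp only at hxy; linear_combination hxy
    exact (mul_eq_zero.1 this).resolve_left (by positivity)
  have i1 : Set.InjOn f (Set.Iic (c / 2)) := by
    intro x hx y hy hxy
    simp only [Set.mem_Iic] at hx hy
    rcases mul_eq_zero.1 (hdiff x y hxy) with h | h <;> linarith
  have i2 : Set.InjOn f (Set.Ioi (c / 2)) := by
    intro x hx y hy hxy
    simp only [Set.mem_Ioi] at hx hy
    rcases mul_eq_zero.1 (hdiff x y hxy) with h | h <;> linarith
  have hle : ∀ x, ENNReal.ofReal |x ^ 2 - (x - c) ^ 2| * G (f x) ≤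
      ENNReal.ofReal |f' x| * G (f x) := fun x => by
    refine mul_le_mul_left (ENNReal.ofReal_le_ofReal ?_) _
    rw [hf']; simp only; rw [abs_mul, abs_of_pos (by norm_num : (0 : ℝ) < 3)]
    linarith [abs_nonneg (x ^ 2 - (x - c) ^ 2)]
  have half : ∀ s : Set ℝ, MeasurableSet s → Set.InjOn f s →
      ∫⁻ x in s, ENNReal.ofReal |x ^ 2 - (x - c) ^ 2| * G (f x) ≤ ∫⁻ x, G x := by
    intro s hs hi
    calc _ ≤ ∫⁻ x in s, ENNReal.ofReal |f' x| * G (f x) := lintegral_mono fun x => hle x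
      _ = ∫⁻ x in f '' s, G x :=
          (lintegral_image_eq_lintegral_abs_deriv_mul hs
            (fun x _ => (hd x).hasDerivWithinAt) hi G).symm
      _ ≤ _ := setLIntegral_le_lintegral _ _
  rw [← lintegral_add_compl _ (measurableSet_Iic (a := c / 2)), Set.compl_Iic, two_mul]
  exact add_le_add (half _ measurableSet_Iic i1) (half _ measurableSet_Ioi i2)

lemma lintegral_corr (g : ℝ → ℝ≥0∞) (hg : Measurable g) :
    ∫⁻ r, ∫⁻ t, g t * g (t + r) = (∫⁻ t, g t) * ∫⁻ t, g t := by
  rw [lintegral_lintegral_swap (by fun_prop)]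
  have : ∀ t, ∫⁻ r, g t * g (t + r) = g t * ∫⁻ r, g r := fun t => by
    rw [lintegral_const_mul _ (by fun_prop), lintegral_add_left_eq_self]
  simp only [this]
  rw [lintegral_mul_const _ hg]

/-- The transversal kernel: the change of variables `(τ, ξ) ↦ (σ, σ')`, whose Jacobian is
`3|ξ² - ξ'²|`, makes its integral bounded uniformly in the shift `z₀`. -/
def kerX (r : ℝ) (z z₀ : ℝ × ℝ × ℝ) : ℝ≥0∞ :=
  ENNReal.ofReal |z.2.1 ^ 2 - (z.2.1 - z₀.2.1) ^ 2| * gg r z.2.2 * (gg r (sg z) * gg r (sg (z - z₀)))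

/-- The kernel `kerX` with the roles of `ξ` and `η` exchanged. -/
def kerY (r : ℝ) (z z₀ : ℝ × ℝ × ℝ) : ℝ≥0∞ :=
  ENNReal.ofReal |z.2.2 ^ 2 - (z.2.2 - z₀.2.2) ^ 2| * gg r z.2.1 * (gg r (sg z) * gg r (sg (z - z₀)))

lemma measurable_kerX (r : ℝ) : Measurable fun w : (ℝ × ℝ × ℝ) × (ℝ × ℝ × ℝ) => kerX r w.1 w.2 := by
  unfold kerX; fun_prop

lemma measurable_kerY (r : ℝ) : Measurable fun w : (ℝ × ℝ × ℝ) × (ℝ × ℝ × ℝ) => kerY r w.1 w.2 := by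
  unfold kerY; fun_prop

lemma lintegral_kerX (r : ℝ) (z₀ : ℝ × ℝ × ℝ) :
    ∫⁻ z, kerX r z z₀ ≤ 2 * (∫⁻ t, gg r t) ^ 3 := by
  set I := ∫⁻ t, gg r t with hI
  have hm : Measurable fun z => kerX r z z₀ := by
    have := (measurable_kerX r).comp (measurable_prodMk_right (y := z₀)); exact this
  set G : ℝ → ℝ≥0∞ := fun ρ => ∫⁻ t, gg r t * gg r (t + ρ) with hG
  have hGm : Measurable G := by
    apply Measurable.lintegral_prod_right' (f := fun p : ℝ × ℝ => gg r p.2 * gg r (p.2 + p.1))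
    fun_prop
  set d : ℝ → ℝ := fun y => z₀.2.1 ^ 3 + y ^ 3 - (y - z₀.2.2) ^ 3 - z₀.1 with hd
  have inner : ∀ x y : ℝ, ∫⁻ t, kerX r (t, x, y) z₀ = gg r y * (ENNReal.ofReal
      |x ^ 2 - (x - z₀.2.1) ^ 2| * G (3 * z₀.2.1 * x ^ 2 - 3 * z₀.2.1 ^ 2 * x + d y)) := by
    intro x y
    have e : ∀ t, kerX r (t, x, y) z₀ = gg r y * ENNReal.ofReal |x ^ 2 - (x - z₀.2.1) ^ 2| *
        (gg r (t - (x ^ 3 + y ^ 3)) * gg r (t - (x ^ 3 + y ^ 3) +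
          (3 * z₀.2.1 * x ^ 2 - 3 * z₀.2.1 ^ 2 * x + d y))) := fun t => by
      unfold kerX
      rw [mul_comm (gg r y)]
      congr 3
      · simp only [sg]; ring
      · simp only [sg, hd, Prod.fst_sub, Prod.snd_sub]; ring
    simp only [e]
    rw [lintegral_const_mul _ (by fun_prop), mul_assoc]
    congr 2
    exact lintegral_sub_right_eq_self (fun t => gg r t * gg r (t + _)) _
  change ∫⁻ z, kerX r z z₀ ∂((volume : Measure ℝ).prod volume) ≤ _
  rw [lintegral_prod_symm _ hm.aemeasurable]
  change ∫⁻ v : ℝ × ℝ, _ ∂((volume : Measure ℝ).prod volume) ≤ _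
  rw [lintegral_prod_symm _ (hm.lintegral_prod_left').aemeasurable]
  simp only [inner]
  calc _ ≤ ∫⁻ y, gg r y * (2 * (I * I)) := by
        refine lintegral_mono fun y => ?_
        rw [lintegral_const_mul _ (by fun_prop)]
        gcongr
        refine (lintegral_quadratic _ _ _).trans (le_of_eq ?_)
        rw [hG, lintegral_corr _ (measurable_gg r)]
    _ = _ := by rw [lintegral_mul_const _ (measurable_gg r)]; ring

lemma lintegral_kerY (r : ℝ) (z₀ : ℝ × ℝ × ℝ) :
    ∫⁻ z, kerY r z z₀ ≤ 2 * (∫⁻ t, gg r t) ^ 3 := by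
  have hmp : MeasurePreserving (fun z : ℝ × ℝ × ℝ => (z.1, z.2.swap)) :=
    (MeasurePreserving.id volume).prod Measure.measurePreserving_swap
  have hm : Measurable fun z => kerY r z z₀ := by
    have := (measurable_kerY r).comp (measurable_prodMk_right (y := z₀)); exact this
  rw [← hmp.lintegral_comp hm]
  refine le_trans (le_of_eq ?_) (lintegral_kerX r (z₀.1, z₀.2.swap))
  congr 1; ext z
  unfold kerY kerX
  simp only [Prod.fst_swap, Prod.snd_swap]
  congr 3
  · unfold sg; simp only [Prod.fst_swap, Prod.snd_swap]; ring
  · unfold sg; simp only [Prod.fst_swap, Prod.snd_swap, Prod.fst_sub, Prod.snd_sub]; ring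

/-- The kernel for the regions of very small output modulation, of very large modulations and of
bounded frequencies. -/
def kerC (z z₀ : ℝ × ℝ × ℝ) : ℝ≥0∞ :=
  gg 2 z.2.1 * gg 2 z.2.2 * (kk (sg z) + gg (5 / 4) (sg z) + gg (5 / 4) (sg (z - z₀)))

lemma measurable_kerC : Measurable fun w : (ℝ × ℝ × ℝ) × (ℝ × ℝ × ℝ) => kerC w.1 w.2 := by
  unfold kerC; fun_prop

lemma lintegral_prod_shift {q k : ℝ → ℝ≥0∞} (hq : Measurable q) (hk : Measurable k) {c : ℝ × ℝ → ℝ}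
    (hc : Measurable c) : ∫⁻ z : ℝ × ℝ × ℝ, q z.2.1 * q z.2.2 * k (z.1 - c z.2) =
      (∫⁻ x, q x) ^ 2 * ∫⁻ t, k t := by
  change ∫⁻ z : ℝ × ℝ × ℝ, _ ∂((volume : Measure ℝ).prod volume) = _
  rw [lintegral_prod_symm _ (by fun_prop)]
  have : ∀ v : ℝ × ℝ, ∫⁻ t, q v.1 * q v.2 * k (t - c v) = q v.1 * q v.2 * ∫⁻ t, k t := fun v => by
    rw [lintegral_const_mul _ (by fun_prop), lintegral_sub_right_eq_self (fun t => k t)]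
  simp only [this]
  rw [lintegral_mul_const _ (by fun_prop)]
  change (∫⁻ v : ℝ × ℝ, _ ∂((volume : Measure ℝ).prod volume)) * _ = _
  rw [lintegral_prod_mul hq.aemeasurable hq.aemeasurable, sq]

lemma lintegral_kerC (z₀ : ℝ × ℝ × ℝ) : ∫⁻ z, kerC z z₀ =
    (∫⁻ x, gg 2 x) ^ 2 * ((∫⁻ t, kk t) + (∫⁻ t, gg (5 / 4) t) + ∫⁻ t, gg (5 / 4) t) := by
  unfold kerC
  simp only [mul_add]
  rw [lintegral_add_right _ (by fun_prop), lintegral_add_right _ (by fun_prop)]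
  have e1 : ∀ z : ℝ × ℝ × ℝ, sg z = z.1 - (fun v : ℝ × ℝ => v.1 ^ 3 + v.2 ^ 3) z.2 := fun z => by
    unfold sg; ring
  have e2 : ∀ z : ℝ × ℝ × ℝ, sg (z - z₀) = z.1 - (fun v : ℝ × ℝ =>
      z₀.1 + (v.1 - z₀.2.1) ^ 3 + (v.2 - z₀.2.2) ^ 3) z.2 := fun z => by
    unfold sg; simp only [Prod.fst_sub, Prod.snd_sub]; ring
  have f1 : ∀ k : ℝ → ℝ≥0∞, Measurable k →
      ∫⁻ z : ℝ × ℝ × ℝ, gg 2 z.2.1 * gg 2 z.2.2 * k (sg z) = (∫⁻ x, gg 2 x) ^ 2 * ∫⁻ t, k t :=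
    fun k hk => by
      rw [← lintegral_prod_shift (measurable_gg 2) hk
        (c := fun v : ℝ × ℝ => v.1 ^ 3 + v.2 ^ 3) (by fun_prop)]
      simp only [e1]
  have f2 : ∀ k : ℝ → ℝ≥0∞, Measurable k →
      ∫⁻ z : ℝ × ℝ × ℝ, gg 2 z.2.1 * gg 2 z.2.2 * k (sg (z - z₀)) =
        (∫⁻ x, gg 2 x) ^ 2 * ∫⁻ t, k t :=
    fun k hk => by
      rw [← lintegral_prod_shift (measurable_gg 2) hk
        (c := fun v : ℝ × ℝ => z₀.1 + (v.1 - z₀.2.1) ^ 3 + (v.2 - z₀.2.2) ^ 3) (by fun_prop)]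
      simp only [e2]
  rw [f1 _ measurable_kk, f1 _ (measurable_gg _), f2 _ (measurable_gg _)]

/-! ### Pointwise bounds for the interaction kernel -/

lemma rpow_anti {x y r : ℝ} (hx : 0 < x) (h : x ≤ y) (hr : r ≤ 0) : y ^ r ≤ x ^ r :=
  Real.rpow_le_rpow_of_nonpos hx h hr

/-- The interaction kernel: `P` stands for `(ξ+η)²`, `A, a₁, a₂` for the dissipative modulation
weights, `X` for `⟨ζ₁⟩⟨ζ₂⟩/⟨ζ⟩`, and `σ` for the modulus of the output modulation. -/
def QQ (ν ε P A a₁ a₂ σ X : ℝ) : ℝ :=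
  P * (A ^ (-1 + ν) * a₁ ^ (-1 + ν) * a₂ ^ (-1 + ν)) * (1 + σ ^ (-ν)) * X ^ (1 - 2 * ε)

section core

variable {ν ε P A a₁ a₂ σ X m J : ℝ}

/-- Region of very small output modulation. -/
lemma QQ_small (hν : 0 < ν) (hν' : ν ≤ 1 / 4) (hε : 0 < ε)
    (hP : 0 ≤ P) (hPm : P ≤ m ^ 2) (hA : 1 ≤ A) (ha₁ : 1 ≤ a₁) (ha₂ : 1 ≤ a₂)
    (hσ : 0 < σ) (hX : 1 ≤ X) (hXm : X ≤ m ^ 2) (hm : 1 ≤ m) (h : σ ≤ (m ^ 40)⁻¹) :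
    QQ ν ε P A a₁ a₂ σ X ≤ 2 * ((m ^ 4)⁻¹ * σ ^ (-(1 / 2) : ℝ)) := by
  have hm0 : 0 < m := by linarith
  have hσ1 : σ ≤ 1 := h.trans (inv_le_one_of_one_le₀ (one_le_pow₀ hm))
  have t : ∀ T : ℝ, 1 ≤ T → T ^ (-1 + ν) ≤ 1 := fun T hT =>
    Real.rpow_le_one_of_one_le_of_nonpos hT (by linarith)
  have hT : A ^ (-1 + ν) * a₁ ^ (-1 + ν) * a₂ ^ (-1 + ν) ≤ 1 := by
    calc _ ≤ (1 : ℝ) * 1 * 1 := by gcongr <;> exact t _ ‹_›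
      _ = 1 := by ring
  have h1 : 1 ≤ σ ^ (-ν) := Real.one_le_rpow_of_pos_of_le_one_of_nonpos hσ hσ1 (by linarith)
  have h2 : σ ^ (-ν) ≤ σ ^ (-(1 / 2) : ℝ) * (m ^ 10)⁻¹ := by
    have e : σ ^ (-ν) = σ ^ (-(1 / 2) : ℝ) * σ ^ (1 / 2 - ν) := by
      rw [← Real.rpow_add hσ]; congr 1; ring
    rw [e]
    gcongr
    calc σ ^ (1 / 2 - ν) ≤ σ ^ (1 / 4 : ℝ) :=
          Real.rpow_le_rpow_of_exponent_ge hσ hσ1 (by linarith)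
      _ ≤ ((m ^ 40)⁻¹) ^ (1 / 4 : ℝ) := by gcongr
      _ = (m ^ 10)⁻¹ := by
          rw [Real.inv_rpow (by positivity), ← Real.rpow_natCast m 40, ← Real.rpow_mul hm0.le,
            ← Real.rpow_natCast m 10]
          norm_num
  have h3 : X ^ (1 - 2 * ε) ≤ m ^ 2 := by
    calc X ^ (1 - 2 * ε) ≤ X ^ (1 : ℝ) := Real.rpow_le_rpow_of_exponent_le hX (by linarith)
      _ ≤ m ^ 2 := by rwa [Real.rpow_one]
  unfold QQ
  have hs0 : 0 ≤ σ ^ (-(1 / 2) : ℝ) := by positivity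
  calc _ ≤ m ^ 2 * 1 * (σ ^ (-ν) + σ ^ (-ν)) * m ^ 2 := by gcongr
    _ = 2 * m ^ 4 * σ ^ (-ν) := by ring
    _ ≤ 2 * m ^ 4 * (σ ^ (-(1 / 2) : ℝ) * (m ^ 10)⁻¹) := by gcongr
    _ = 2 * ((m ^ 6)⁻¹ * σ ^ (-(1 / 2) : ℝ)) := by field_simp
    _ ≤ _ := by gcongr; norm_num

lemma sing_le (hν : 0 < ν) (hm : 1 ≤ m) (h : (m ^ 40)⁻¹ ≤ σ) :
    1 + σ ^ (-ν) ≤ 2 * m ^ (40 * ν) := by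
  have hm0 : 0 < m := by linarith
  have h1 : 1 ≤ m ^ (40 * ν) := Real.one_le_rpow hm (by linarith)
  have h2 : σ ^ (-ν) ≤ m ^ (40 * ν) := by
    calc σ ^ (-ν) ≤ ((m ^ 40)⁻¹) ^ (-ν) := rpow_anti (by positivity) h (by linarith)
      _ = m ^ (40 * ν) := by
        rw [Real.inv_rpow (by positivity), ← Real.rpow_natCast m 40, ← Real.rpow_mul hm0.le,
          ← Real.rpow_neg hm0.le]
        congr 1; push_cast; ring
  linarith

/-- Region of very large modulations, or of bounded frequencies. -/
lemma QQ_large (hν : 0 < ν) (hν' : ν ≤ 1 / 40) (hε : 0 < ε)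
    (hP : 0 ≤ P) (hPm : P ≤ m ^ 2) (hA : 1 ≤ A) (ha₁ : 1 ≤ a₁) (ha₂ : 1 ≤ a₂)
    (hσ : 0 < σ) (hX : 1 ≤ X) (hXm : X ≤ m ^ 2) (hm : 1 ≤ m) (h : (m ^ 40)⁻¹ ≤ σ)
    (h' : m ^ 72 ≤ A * a₁ * a₂ ∨ m ≤ 2) :
    QQ ν ε P A a₁ a₂ σ X ≤
      1024 * ((m ^ 4)⁻¹ * (A ^ (-(5 / 4) : ℝ) + a₂ ^ (-(5 / 4) : ℝ))) := by
  have hm0 : 0 < m := by linarith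
  have hA0 : 0 < A := by linarith
  have ha₁0 : 0 < a₁ := by linarith
  have ha₂0 : 0 < a₂ := by linarith
  have hB1 : 1 ≤ A * a₁ * a₂ := one_le_mul_of_one_le_of_one_le
    (one_le_mul_of_one_le_of_one_le hA ha₁) ha₂
  have t : ∀ T : ℝ, 1 ≤ T → T ^ (-1 + ν) ≤ T ^ (-(5 / 8) : ℝ) * T ^ (-(1 / 8) : ℝ) := fun T hT => by
    rw [← Real.rpow_add (by linarith)]
    exact Real.rpow_le_rpow_of_exponent_le hT (by linarith)
  have hT : A ^ (-1 + ν) * a₁ ^ (-1 + ν) * a₂ ^ (-1 + ν) ≤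
      (A * a₁ * a₂) ^ (-(1 / 8) : ℝ) * (A ^ (-(5 / 8) : ℝ) * a₂ ^ (-(5 / 8) : ℝ)) := by
    have h1 : a₁ ^ (-(5 / 8) : ℝ) ≤ 1 := Real.rpow_le_one_of_one_le_of_nonpos ha₁ (by norm_num)
    rw [Real.mul_rpow (by positivity) ha₂0.le, Real.mul_rpow hA0.le ha₁0.le]
    calc _ ≤ (A ^ (-(5 / 8) : ℝ) * A ^ (-(1 / 8) : ℝ)) * (1 * a₁ ^ (-(1 / 8) : ℝ)) *
          (a₂ ^ (-(5 / 8) : ℝ) * a₂ ^ (-(1 / 8) : ℝ)) := by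
          gcongr
          · exact t _ hA
          · exact (t _ ha₁).trans (by gcongr)
          · exact t _ ha₂
      _ = _ := by ring
  have hB : (A * a₁ * a₂) ^ (-(1 / 8) : ℝ) ≤ 512 * (m ^ 9)⁻¹ := by
    rcases h' with h' | h'
    · calc (A * a₁ * a₂) ^ (-(1 / 8) : ℝ) ≤ (m ^ 72) ^ (-(1 / 8) : ℝ) :=
            rpow_anti (by positivity) h' (by norm_num)
        _ = (m ^ 9)⁻¹ := by
            rw [← Real.rpow_natCast m 72, ← Real.rpow_mul hm0.le, ← Real.rpow_natCast m 9,
              ← Real.rpow_neg hm0.le]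
            norm_num
        _ ≤ _ := by
            have : 0 < (m ^ 9)⁻¹ := by positivity
            linarith
    · calc (A * a₁ * a₂) ^ (-(1 / 8) : ℝ) ≤ 1 :=
            Real.rpow_le_one_of_one_le_of_nonpos hB1 (by norm_num)
        _ ≤ _ := by
            rw [← div_eq_mul_inv, le_div_iff₀ (by positivity)]
            have : m ^ 9 ≤ 2 ^ 9 := by gcongr
            norm_num at this ⊢; exact this
  have hY : A ^ (-(5 / 8) : ℝ) * a₂ ^ (-(5 / 8) : ℝ) ≤ A ^ (-(5 / 4) : ℝ) + a₂ ^ (-(5 / 4) : ℝ) := by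
    have e : ∀ T : ℝ, 0 < T → T ^ (-(5 / 4) : ℝ) = (T ^ (-(5 / 8) : ℝ)) ^ 2 := fun T hT => by
      rw [← Real.rpow_natCast, ← Real.rpow_mul hT.le]; norm_num
    rw [e A hA0, e a₂ ha₂0]
    nlinarith [sq_nonneg (A ^ (-(5 / 8) : ℝ) - a₂ ^ (-(5 / 8) : ℝ)),
      sq_nonneg (A ^ (-(5 / 8) : ℝ)), sq_nonneg (a₂ ^ (-(5 / 8) : ℝ))]
  have hE : 1 + σ ^ (-ν) ≤ 2 * m := by
    refine (sing_le hν hm h).trans ?_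
    gcongr
    calc m ^ (40 * ν) ≤ m ^ (1 : ℝ) := Real.rpow_le_rpow_of_exponent_le hm (by linarith)
      _ = m := Real.rpow_one m
  have h3 : X ^ (1 - 2 * ε) ≤ m ^ 2 := by
    calc X ^ (1 - 2 * ε) ≤ X ^ (1 : ℝ) := Real.rpow_le_rpow_of_exponent_le hX (by linarith)
      _ ≤ m ^ 2 := by rwa [Real.rpow_one]
  unfold QQ
  have hs0 : 0 ≤ σ ^ (-ν) := by positivity
  calc _ ≤ m ^ 2 * ((512 * (m ^ 9)⁻¹) * (A ^ (-(5 / 4) : ℝ) + a₂ ^ (-(5 / 4) : ℝ))) *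
        (2 * m) * m ^ 2 := by
        have hTB := hT.trans (mul_le_mul hB hY (by positivity) (by positivity))
        refine mul_le_mul (mul_le_mul (mul_le_mul hPm hTB (by positivity) (by positivity)) hE
          (by positivity) (by positivity)) h3 (by positivity) (by positivity)
    _ = _ := by field_simp; norm_num

lemma gain (hν : 0 < ν) (hm : 1 ≤ m) {T : ℝ} (hT : 1 ≤ T) (hTm : T ≤ m ^ 72) :
    T ^ (-1 + ν) ≤ T ^ (-(1 + ν)) * m ^ (144 * ν) ∧ T ^ ν ≤ m ^ (72 * ν) := by
  have hm0 : 0 < m := by linarith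
  have hT0 : 0 < T := by linarith
  have e : ∀ r : ℝ, 0 ≤ r → T ^ r ≤ m ^ (72 * r) := fun r hr => by
    calc T ^ r ≤ (m ^ 72) ^ r := by gcongr
      _ = _ := by rw [← Real.rpow_natCast m 72, ← Real.rpow_mul hm0.le]; norm_num
  refine ⟨?_, e ν hν.le⟩
  have h1 : T ^ (-1 + ν) = T ^ (-(1 + ν)) * T ^ (2 * ν) := by
    rw [← Real.rpow_add hT0]; congr 1; ring
  rw [h1]
  gcongr
  refine (e (2 * ν) (by linarith)).trans (le_of_eq ?_)
  congr 1; ring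

/-- Critical region with the first input frequency frozen: the weight `a₁` absorbs `(ξ+η)²`. -/
lemma QQ_inner (hν : 0 < ν) (hνε : 401 * ν ≤ 2 * ε) (hε' : ε ≤ 1 / 4)
    (hP : 0 ≤ P) (hPa : P ≤ 4 * a₁) (hA : 1 ≤ A) (ha₁ : 1 ≤ a₁) (ha₂ : 1 ≤ a₂)
    (hσ : 0 < σ) (hX : 1 ≤ X) (hm : 1 ≤ m) (h : (m ^ 40)⁻¹ ≤ σ)
    (hAm : A ≤ m ^ 72) (ha₁m : a₁ ≤ m ^ 72) (ha₂m : a₂ ≤ m ^ 72)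
    (hJ : 1 ≤ J) (hJm : J ≤ m) (hXJ : X ≤ m ^ 2 / J) :
    QQ ν ε P A a₁ a₂ σ X ≤ 8 * (m ^ 2 * J ^ (-(1 + ν)) * (A ^ (-(1 + ν)) * a₂ ^ (-(1 + ν)))) := by
  have hm0 : 0 < m := by linarith
  have hJ0 : 0 < J := by linarith
  have hA0 : 0 < A := by linarith
  have ha₁0 : 0 < a₁ := by linarith
  have ha₂0 : 0 < a₂ := by linarith
  have h1 : P * a₁ ^ (-1 + ν) ≤ 4 * m ^ (72 * ν) := by
    calc P * a₁ ^ (-1 + ν) ≤ (4 * a₁) * a₁ ^ (-1 + ν) := by gcongr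
      _ = 4 * a₁ ^ ν := by
          rw [mul_assoc]; congr 1
          nth_rewrite 1 [← Real.rpow_one a₁]
          rw [← Real.rpow_add ha₁0]; congr 1; ring
      _ ≤ _ := by gcongr; exact (gain hν hm ha₁ ha₁m).2
  have h2 := (gain hν hm hA hAm).1
  have h3 := (gain hν hm ha₂ ha₂m).1
  have h4 := sing_le hν hm h
  have h5 : X ^ (1 - 2 * ε) ≤ m ^ (2 - 4 * ε) * J ^ (-1 + 2 * ε) := by
    calc X ^ (1 - 2 * ε) ≤ (m ^ 2 / J) ^ (1 - 2 * ε) := by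
          apply Real.rpow_le_rpow (by linarith) hXJ (by linarith)
      _ = _ := by
          rw [Real.div_rpow (by positivity) hJ0.le, div_eq_mul_inv, ← Real.rpow_neg hJ0.le,
            ← Real.rpow_natCast m 2, ← Real.rpow_mul hm0.le]
          congr 2 <;> push_cast <;> ring
  have h6 : m ^ (72 * ν) * m ^ (144 * ν) * m ^ (144 * ν) * m ^ (40 * ν) *
      (m ^ (2 - 4 * ε) * J ^ (-1 + 2 * ε)) ≤ m ^ 2 * J ^ (-(1 + ν)) := by
    have e1 : m ^ (72 * ν) * m ^ (144 * ν) * m ^ (144 * ν) * m ^ (40 * ν) * m ^ (2 - 4 * ε) =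
        m ^ 2 * m ^ (400 * ν - 4 * ε) := by
      rw [← Real.rpow_natCast m 2]
      simp only [← Real.rpow_add hm0]
      congr 1; push_cast; ring
    rw [← mul_assoc, e1, mul_assoc]
    gcongr
    calc m ^ (400 * ν - 4 * ε) * J ^ (-1 + 2 * ε) ≤ J ^ (400 * ν - 4 * ε) * J ^ (-1 + 2 * ε) := by
          exact mul_le_mul_of_nonneg_right (rpow_anti hJ0 hJm (by linarith)) (by positivity)
      _ = J ^ (400 * ν - 4 * ε + (-1 + 2 * ε)) := by rw [← Real.rpow_add hJ0]
      _ ≤ _ := Real.rpow_le_rpow_of_exponent_le hJ (by linarith)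
  unfold QQ
  have hs0 : 0 ≤ σ ^ (-ν) := by positivity
  calc P * (A ^ (-1 + ν) * a₁ ^ (-1 + ν) * a₂ ^ (-1 + ν)) * (1 + σ ^ (-ν)) * X ^ (1 - 2 * ε)
      = (P * a₁ ^ (-1 + ν)) * A ^ (-1 + ν) * a₂ ^ (-1 + ν) * (1 + σ ^ (-ν)) * X ^ (1 - 2 * ε) := by
        ring
    _ ≤ (4 * m ^ (72 * ν)) * (A ^ (-(1 + ν)) * m ^ (144 * ν)) * (a₂ ^ (-(1 + ν)) * m ^ (144 * ν)) *
        (2 * m ^ (40 * ν)) * (m ^ (2 - 4 * ε) * J ^ (-1 + 2 * ε)) := by gcongr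
    _ = 8 * (A ^ (-(1 + ν)) * a₂ ^ (-(1 + ν))) * (m ^ (72 * ν) * m ^ (144 * ν) * m ^ (144 * ν) *
        m ^ (40 * ν) * (m ^ (2 - 4 * ε) * J ^ (-1 + 2 * ε))) := by ring
    _ ≤ 8 * (A ^ (-(1 + ν)) * a₂ ^ (-(1 + ν))) * (m ^ 2 * J ^ (-(1 + ν))) := by gcongr
    _ = _ := by ring

/-- Critical region with the output frequency frozen: the weight `A` absorbs `(ξ+η)²`. -/
lemma QQ_outer (hν : 0 < ν) (hνε : 401 * ν ≤ 2 * ε) (hε' : ε ≤ 1 / 4)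
    (hP : 0 ≤ P) (hPA : P ≤ A) (hA : 1 ≤ A) (ha₁ : 1 ≤ a₁) (ha₂ : 1 ≤ a₂)
    (hσ : 0 < σ) (hX : 1 ≤ X) (hm : 1 ≤ m) (h : (m ^ 40)⁻¹ ≤ σ)
    (hAm : A ≤ m ^ 72) (ha₁m : a₁ ≤ m ^ 72) (ha₂m : a₂ ≤ m ^ 72)
    (hXm : X ≤ 12 * m) :
    QQ ν ε P A a₁ a₂ σ X ≤
      24 * (m ^ 2 * m ^ (-(1 + ν)) * (a₁ ^ (-(1 + ν)) * a₂ ^ (-(1 + ν)))) := by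
  have hm0 : 0 < m := by linarith
  have hA0 : 0 < A := by linarith
  have ha₁0 : 0 < a₁ := by linarith
  have ha₂0 : 0 < a₂ := by linarith
  have h1 : P * A ^ (-1 + ν) ≤ m ^ (72 * ν) := by
    calc P * A ^ (-1 + ν) ≤ A * A ^ (-1 + ν) := by gcongr
      _ = A ^ ν := by
          nth_rewrite 1 [← Real.rpow_one A]
          rw [← Real.rpow_add hA0]; congr 1; ring
      _ ≤ _ := (gain hν hm hA hAm).2
  have h2 := (gain hν hm ha₁ ha₁m).1
  have h3 := (gain hν hm ha₂ ha₂m).1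
  have h4 := sing_le hν hm h
  have h5 : X ^ (1 - 2 * ε) ≤ 12 * m ^ (1 - 2 * ε) := by
    calc X ^ (1 - 2 * ε) ≤ (12 * m) ^ (1 - 2 * ε) := by
          apply Real.rpow_le_rpow (by linarith) hXm (by linarith)
      _ = 12 ^ (1 - 2 * ε) * m ^ (1 - 2 * ε) := by rw [Real.mul_rpow (by norm_num) hm0.le]
      _ ≤ 12 ^ (1 : ℝ) * m ^ (1 - 2 * ε) := by
          gcongr
          · norm_num
          · linarith
      _ = _ := by rw [Real.rpow_one]
  have h6 : m ^ (72 * ν) * m ^ (144 * ν) * m ^ (144 * ν) * m ^ (40 * ν) *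
      m ^ (1 - 2 * ε) ≤ m ^ 2 * m ^ (-(1 + ν)) := by
    rw [← Real.rpow_natCast m 2]
    simp only [← Real.rpow_add hm0]
    apply Real.rpow_le_rpow_of_exponent_le hm
    push_cast; linarith
  unfold QQ
  have hs0 : 0 ≤ σ ^ (-ν) := by positivity
  calc P * (A ^ (-1 + ν) * a₁ ^ (-1 + ν) * a₂ ^ (-1 + ν)) * (1 + σ ^ (-ν)) * X ^ (1 - 2 * ε)
      = (P * A ^ (-1 + ν)) * a₁ ^ (-1 + ν) * a₂ ^ (-1 + ν) * (1 + σ ^ (-ν)) * X ^ (1 - 2 * ε) := by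
        ring
    _ ≤ m ^ (72 * ν) * (a₁ ^ (-(1 + ν)) * m ^ (144 * ν)) * (a₂ ^ (-(1 + ν)) * m ^ (144 * ν)) *
        (2 * m ^ (40 * ν)) * (12 * m ^ (1 - 2 * ε)) := by gcongr
    _ = 24 * (a₁ ^ (-(1 + ν)) * a₂ ^ (-(1 + ν))) * (m ^ (72 * ν) * m ^ (144 * ν) * m ^ (144 * ν) *
        m ^ (40 * ν) * m ^ (1 - 2 * ε)) := by ring
    _ ≤ 24 * (a₁ ^ (-(1 + ν)) * a₂ ^ (-(1 + ν))) * (m ^ 2 * m ^ (-(1 + ν))) := by gcongr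
    _ = _ := by ring

end core

/-- If `x = x₁ + x₂` is not small and `x²` is close to `x₂²`, then `x₁²` is not close to `x₂²`:
three numbers of equal modulus cannot satisfy `x = x₁ + x₂` unless they vanish. -/
lemma transversal_one {x y m : ℝ} (hm : 0 < m) (hx : m / 24 ≤ |x|)
    (h : |x ^ 2 - y ^ 2| < m ^ 2 / 10000) : m ^ 2 / 10000 ≤ |(x - y) ^ 2 - y ^ 2| := by
  by_contra! h2
  have e : (x - y) ^ 2 - y ^ 2 = x * (x - 2 * y) := by ring
  rw [e, abs_mul] at h2
  have h3 : |x - 2 * y| ≤ 24 * m / 10000 := by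
    by_contra! h4
    have : m / 24 * (24 * m / 10000) ≤ |x| * |x - 2 * y| := by
      apply mul_le_mul hx h4.le (by positivity) (abs_nonneg _)
    nlinarith
  obtain ⟨k1, k2⟩ := abs_lt.1 h
  obtain ⟨l1, l2⟩ := abs_le.1 h3
  rcases le_abs.1 hx with hx | hx <;> nlinarith

/-- Either one of the gradients with the first input frozen is nondegenerate, or the output
frequency is comparable to the largest one and one of the gradients with the output frozen is
nondegenerate. -/
lemma transversal {x₁ y₁ x₂ y₂ m : ℝ} (hm : m = 1 + |x₁| + |y₁| + |x₂| + |y₂|) (hm2 : 2 ≤ m) :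
    (m ^ 2 / 10000 ≤ |(x₁ + x₂) ^ 2 - x₂ ^ 2| ∨ m ^ 2 / 10000 ≤ |(y₁ + y₂) ^ 2 - y₂ ^ 2|) ∨
    (m / 12 ≤ |x₁ + x₂| + |y₁ + y₂| ∧
      (m ^ 2 / 10000 ≤ |x₁ ^ 2 - x₂ ^ 2| ∨ m ^ 2 / 10000 ≤ |y₁ ^ 2 - y₂ ^ 2|)) := by
  by_cases h : m ^ 2 / 10000 ≤ |(x₁ + x₂) ^ 2 - x₂ ^ 2| ∨ m ^ 2 / 10000 ≤ |(y₁ + y₂) ^ 2 - y₂ ^ 2|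
  · exact Or.inl h
  right
  push Not at h
  obtain ⟨hx, hy⟩ := h
  have hm0 : 0 < m := by linarith
  have aux : ∀ x y : ℝ, |x ^ 2 - y ^ 2| < m ^ 2 / 10000 → |y| ≤ |x| + m / 100 := by
    intro x y hxy
    have h1 := (abs_lt.1 hxy).1
    by_contra! h2
    have h3 := sq_abs x
    have h4 := sq_abs y
    nlinarith [abs_nonneg x]
  have b1 := aux _ _ hx
  have b2 := aux _ _ hy
  have c1 : |x₁| ≤ |x₁ + x₂| + |x₂| := by
    calc |x₁| = |(x₁ + x₂) - x₂| := by ring_nf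
      _ ≤ _ := abs_sub _ _
  have c2 : |y₁| ≤ |y₁ + y₂| + |y₂| := by
    calc |y₁| = |(y₁ + y₂) - y₂| := by ring_nf
      _ ≤ _ := abs_sub _ _
  have hs : m / 12 ≤ |x₁ + x₂| + |y₁ + y₂| := by linarith
  refine ⟨hs, ?_⟩
  rcases le_total (m / 24) |x₁ + x₂| with hx' | hx'
  · left
    have := transversal_one hm0 hx' hx
    rwa [add_sub_cancel_right] at this
  · right
    have := transversal_one hm0 (by linarith) hy
    rwa [add_sub_cancel_right] at this

/-! ### Reduction of the weighted kernel to the model kernels -/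

lemma JJ_mul_div {z₁ z₂ : ℝ × ℝ × ℝ} : 1 ≤ JJ z₁ * JJ z₂ / JJ (z₁ + z₂) := by
  rw [le_div_iff₀ (by linarith [JJ_ge_one (z₁ + z₂)]), one_mul]
  have h1 := abs_add_le z₁.2.1 z₂.2.1
  have h2 := abs_add_le z₁.2.2 z₂.2.2
  have a := abs_nonneg z₁.2.1
  have b := abs_nonneg z₁.2.2
  have c := abs_nonneg z₂.2.1
  have d := abs_nonneg z₂.2.2
  simp only [JJ, Prod.fst_add, Prod.snd_add]
  nlinarith [mul_nonneg a c, mul_nonneg a d, mul_nonneg b c, mul_nonneg b d]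

/-- The output weight is bounded by the input weights times the interaction kernel `QQ`. This is
where `s > -1/2` enters: the factor `⟨ζ₁⟩⟨ζ₂⟩/⟨ζ⟩ ≥ 1` appears to the power `-2s ≤ 1 - 2ε`. -/
lemma weight_le_QQ {s ν ε : ℝ} (hν : 0 < ν) (hε : ε ≤ s + 1 / 2) (z₁ z₂ : ℝ × ℝ × ℝ) :
    pp (z₁ + z₂) ^ 2 * (wt s (-(1 / 2)) (z₁ + z₂) * ww ν (z₁ + z₂)) ≤
      wt s ((1 - ν) / 2) z₁ * wt s ((1 - ν) / 2) z₂ *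
        QQ ν ε (pp (z₁ + z₂) ^ 2) (AA (z₁ + z₂)) (AA z₁) (AA z₂) |sg (z₁ + z₂)|
          (JJ z₁ * JJ z₂ / JJ (z₁ + z₂)) := by
  set z := z₁ + z₂
  have hX : 1 ≤ JJ z₁ * JJ z₂ / JJ z := JJ_mul_div
  have hJ := JJ_ge_one z
  have hJ₁ := JJ_ge_one z₁
  have hJ₂ := JJ_ge_one z₂
  have hA := AA_ge_one z
  have hA₁ := AA_ge_one z₁
  have hA₂ := AA_ge_one z₂
  have hw : ww ν z ≤ AA z ^ ν * (1 + |sg z| ^ (-ν)) := by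
    have h1 : |sg z| ^ ν ≤ AA z ^ ν := by
      apply Real.rpow_le_rpow (abs_nonneg _) _ hν.le
      unfold AA; nlinarith [sq_nonneg (pp z)]
    have h2 : 1 ≤ AA z ^ ν := Real.one_le_rpow hA hν.le
    have h3 : 0 ≤ |sg z| ^ (-ν) := by positivity
    unfold ww
    nlinarith
  have e : ∀ T : ℝ, 1 ≤ T → ∀ b : ℝ, (T ^ 2) ^ b = T ^ (2 * b) := fun T hT b => by
    rw [← Real.rpow_natCast, ← Real.rpow_mul (by linarith)]; norm_num
  have hXs : JJ z ^ (2 * s) ≤ JJ z₁ ^ (2 * s) * JJ z₂ ^ (2 * s) *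
      (JJ z₁ * JJ z₂ / JJ z) ^ (1 - 2 * ε) := by
    calc JJ z ^ (2 * s) = JJ z₁ ^ (2 * s) * JJ z₂ ^ (2 * s) *
          (JJ z₁ * JJ z₂ / JJ z) ^ (-(2 * s)) := by
          rw [Real.rpow_neg (by positivity), Real.div_rpow (by positivity) (by positivity),
            Real.mul_rpow (by positivity) (by positivity)]
          field_simp
      _ ≤ _ := by
          gcongr
          linarith
  have ha : ∀ T : ℝ, 1 ≤ T → T ^ (1 - ν) * T ^ (-1 + ν) = 1 := fun T hT => by
    rw [← Real.rpow_add (by linarith)]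
    simp
  have hb : AA z ^ (-1 : ℝ) * AA z ^ ν = AA z ^ (-1 + ν) := by
    rw [← Real.rpow_add (by linarith)]
  have hsg : 0 ≤ |sg z| ^ (-ν) := by positivity
  unfold wt QQ
  rw [e _ hJ, e _ hJ₁, e _ hJ₂, e _ hA, e _ hA₁, e _ hA₂]
  rw [show 2 * ((1 - ν) / 2) = 1 - ν by ring, show (2 : ℝ) * -(1 / 2) = -1 by norm_num]
  calc pp z ^ 2 * (JJ z ^ (2 * s) * AA z ^ (-1 : ℝ) * ww ν z)
      ≤ pp z ^ 2 * ((JJ z₁ ^ (2 * s) * JJ z₂ ^ (2 * s) *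
      (JJ z₁ * JJ z₂ / JJ z) ^ (1 - 2 * ε)) * AA z ^ (-1 : ℝ) *
        (AA z ^ ν * (1 + |sg z| ^ (-ν)))) := by
        gcongr
        exact ww_nonneg _ _
    _ = pp z ^ 2 * ((JJ z₁ ^ (2 * s) * JJ z₂ ^ (2 * s) *
      (JJ z₁ * JJ z₂ / JJ z) ^ (1 - 2 * ε)) * AA z ^ (-1 + ν) *
        (1 + |sg z| ^ (-ν))) * (AA z₁ ^ (1 - ν) * AA z₁ ^ (-1 + ν)) *
          (AA z₂ ^ (1 - ν) * AA z₂ ^ (-1 + ν)) := by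
        rw [ha _ hA₁, ha _ hA₂, ← hb]; ring
    _ = _ := by ring

lemma kerX_eq (r : ℝ) (z z₀ : ℝ × ℝ × ℝ) : kerX r z z₀ =
    ENNReal.ofReal (|z.2.1 ^ 2 - (z.2.1 - z₀.2.1) ^ 2| * (1 + |z.2.2|) ^ (-r) *
      ((1 + |sg z|) ^ (-r) * (1 + |sg (z - z₀)|) ^ (-r))) := by
  unfold kerX gg
  rw [ENNReal.ofReal_mul (by positivity), ENNReal.ofReal_mul (by positivity),
    ENNReal.ofReal_mul (by positivity)]

lemma kerY_eq (r : ℝ) (z z₀ : ℝ × ℝ × ℝ) : kerY r z z₀ =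
    ENNReal.ofReal (|z.2.2 ^ 2 - (z.2.2 - z₀.2.2) ^ 2| * (1 + |z.2.1|) ^ (-r) *
      ((1 + |sg z|) ^ (-r) * (1 + |sg (z - z₀)|) ^ (-r))) := by
  unfold kerY gg
  rw [ENNReal.ofReal_mul (by positivity), ENNReal.ofReal_mul (by positivity),
    ENNReal.ofReal_mul (by positivity)]

/-- The model kernels to be integrated in the output variable. -/
def SB (r : ℝ) (z z₀ : ℝ × ℝ × ℝ) : ℝ≥0∞ := kerX r z z₀ + kerY r z z₀ + kerC z z₀

/-- The model kernels to be integrated in an input variable. -/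
def SA (r : ℝ) (z₀ z : ℝ × ℝ × ℝ) : ℝ≥0∞ := kerX r z₀ z + kerY r z₀ z

set_option maxHeartbeats 1000000 in
/-- The interaction kernel when the first input has the larger `|ξ + η|`. -/
lemma QQ_le_ker {ν ε : ℝ} (hν : 0 < ν) (hν' : ν ≤ 1 / 40) (hνε : 401 * ν ≤ 2 * ε)
    (hε' : ε ≤ 1 / 4) (z₁ z₂ : ℝ × ℝ × ℝ) (hp : |pp z₂| ≤ |pp z₁|) (hσ : sg (z₁ + z₂) ≠ 0) :
    ENNReal.ofReal (QQ ν ε (pp (z₁ + z₂) ^ 2) (AA (z₁ + z₂)) (AA z₁) (AA z₂) |sg (z₁ + z₂)|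
          (JJ z₁ * JJ z₂ / JJ (z₁ + z₂))) ≤
      ENNReal.ofReal 240000 * (SA (1 + ν) z₁ (z₁ + z₂) + SB (1 + ν) (z₁ + z₂) z₁) := by
  have hX : 1 ≤ JJ z₁ * JJ z₂ / JJ (z₁ + z₂) := JJ_mul_div
  set z := z₁ + z₂ with hz
  have hz1 : z - z₁ = z₂ := by rw [hz]; abel
  have hz2 : z₁ - z = -z₂ := by rw [hz]; abel
  have hx : z.2.1 = z₁.2.1 + z₂.2.1 := rfl
  have hy : z.2.2 = z₁.2.2 + z₂.2.2 := rfl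
  have hpz : pp z = pp z₁ + pp z₂ := by unfold pp; rw [hx, hy]; ring
  have hε : 0 < ε := by linarith
  have hJ := JJ_ge_one z
  have hA := AA_ge_one z
  have hA₁ := AA_ge_one z₁
  have hA₂ := AA_ge_one z₂
  have hAs : ∀ w, 1 + |sg w| ≤ AA w := fun w => by unfold AA; nlinarith [sq_nonneg (pp w)]
  have hσ0 : 0 < |sg z| := abs_pos.2 hσ
  obtain ⟨m, hm⟩ : ∃ m, m = 1 + |z₁.2.1| + |z₁.2.2| + |z₂.2.1| + |z₂.2.2| := ⟨_, rfl⟩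
  have n1 := abs_nonneg z₁.2.1
  have n2 := abs_nonneg z₁.2.2
  have n3 := abs_nonneg z₂.2.1
  have n4 := abs_nonneg z₂.2.2
  have hm1 : 1 ≤ m := by linarith
  have hm0 : 0 < m := by linarith
  have hax : |z.2.1| ≤ |z₁.2.1| + |z₂.2.1| := abs_add_le _ _
  have hay : |z.2.2| ≤ |z₁.2.2| + |z₂.2.2| := abs_add_le _ _
  have hJm : JJ z ≤ m := by unfold JJ; linarith
  have hJ₁m : JJ z₁ ≤ m := by unfold JJ; linarith
  have hJ₂m : JJ z₂ ≤ m := by unfold JJ; linarith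
  have hJJ : JJ z₁ * JJ z₂ ≤ m ^ 2 := by
    rw [sq]; exact mul_le_mul hJ₁m hJ₂m (by linarith [JJ_ge_one z₂]) hm0.le
  have hXJ : JJ z₁ * JJ z₂ / JJ z ≤ m ^ 2 / JJ z := by gcongr
  have hXm : JJ z₁ * JJ z₂ / JJ z ≤ m ^ 2 := hXJ.trans (div_le_self (by positivity) hJ)
  have hPm : pp z ^ 2 ≤ m ^ 2 := by
    rw [← sq_abs]
    gcongr
    have : |pp z| ≤ |z.2.1| + |z.2.2| := abs_add_le _ _
    linarith
  have hP0 : 0 ≤ pp z ^ 2 := by positivity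
  have hPa : pp z ^ 2 ≤ 4 * AA z₁ := by
    have h1 : |pp z| ≤ 2 * |pp z₁| := by
      rw [hpz]; exact (abs_add_le _ _).trans (by linarith)
    have h2 : pp z ^ 2 ≤ (2 * |pp z₁|) ^ 2 := by rw [← sq_abs]; gcongr
    rw [mul_pow, sq_abs] at h2
    unfold AA; nlinarith [abs_nonneg (sg z₁)]
  have hPA : pp z ^ 2 ≤ AA z := by
    unfold AA; nlinarith [abs_nonneg (sg z)]
  have hm4 : (m ^ 4)⁻¹ ≤ (1 + |z.2.1|) ^ (-2 : ℝ) * (1 + |z.2.2|) ^ (-2 : ℝ) := by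
    have k1 := abs_nonneg z.2.1
    have k2 := abs_nonneg z.2.2
    rw [Real.rpow_neg (by positivity), Real.rpow_neg (by positivity), ← mul_inv]
    gcongr
    rw [show (2 : ℝ) = ((2 : ℕ) : ℝ) by norm_num, Real.rpow_natCast, Real.rpow_natCast,
      show m ^ 4 = m ^ 2 * m ^ 2 by ring]
    unfold JJ at hJm
    gcongr <;> linarith
  have c0 : SB (1 + ν) z z₁ ≤ SA (1 + ν) z₁ z + SB (1 + ν) z z₁ := le_add_self
  have cC : kerC z z₁ ≤ SB (1 + ν) z z₁ := le_add_self
  have cX : kerX (1 + ν) z z₁ ≤ SB (1 + ν) z z₁ := by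
    unfold SB; rw [add_assoc]; exact le_self_add
  have cY : kerY (1 + ν) z z₁ ≤ SB (1 + ν) z z₁ := by
    unfold SB; rw [add_assoc, add_left_comm]; exact le_self_add
  have dX : kerX (1 + ν) z₁ z ≤ SA (1 + ν) z₁ z + SB (1 + ν) z z₁ := by
    unfold SA; rw [add_assoc]; exact le_self_add
  have dY : kerY (1 + ν) z₁ z ≤ SA (1 + ν) z₁ z + SB (1 + ν) z z₁ := by
    unfold SA; rw [add_assoc, add_left_comm]; exact le_self_add
  have rp : ∀ {x y : ℝ}, 0 ≤ x → 1 + x ≤ y → y ^ (-(1 + ν)) ≤ (1 + x) ^ (-(1 + ν)) :=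
    fun h0 h => rpow_anti (by linarith) h (by linarith)
  have fin : ∀ {q k : ℝ} {K : ℝ≥0∞}, 0 ≤ k → q ≤ 240000 * k → ENNReal.ofReal k ≤ K →
      K ≤ SA (1 + ν) z₁ z + SB (1 + ν) z z₁ →
      ENNReal.ofReal q ≤ ENNReal.ofReal 240000 * (SA (1 + ν) z₁ z + SB (1 + ν) z z₁) := by
    intro q k K hk h1 h2 h3
    calc ENNReal.ofReal q ≤ ENNReal.ofReal 240000 * ENNReal.ofReal k := by
          rw [← ENNReal.ofReal_mul (by norm_num)]; exact ENNReal.ofReal_le_ofReal h1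
      _ ≤ _ := by gcongr; exact h2.trans h3
  -- For `|σ| ≤ m^{-40}` the bound by `|σ|^{-1/2}` leaves enough negative powers of `m`.
  rcases le_total |sg z| (m ^ 40)⁻¹ with h | h
  · have hs1 : |sg z| ≤ 1 := h.trans (inv_le_one_of_one_le₀ (one_le_pow₀ hm1))
    refine fin (k := (1 + |z.2.1|) ^ (-2 : ℝ) * (1 + |z.2.2|) ^ (-2 : ℝ) *
      |sg z| ^ (-(1 / 2) : ℝ)) (by positivity) ?_ ?_ (cC.trans c0)
    · refine (QQ_small hν (by linarith) hε hP0 hPm hA hA₁ hA₂ hσ0 hX hXm hm1 h).trans ?_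
      refine mul_le_mul (by norm_num) ?_ (by positivity) (by norm_num)
      gcongr
    · rw [ENNReal.ofReal_mul (by positivity), ENNReal.ofReal_mul (by positivity)]
      unfold kerC
      refine mul_le_mul' le_rfl ?_
      rw [add_assoc]
      refine le_trans (le_of_eq ?_) le_self_add
      unfold kk
      rw [Set.indicator_of_mem (Set.mem_Icc.2 (abs_le.1 hs1))]
  -- A large product of the weights `AA` yields negative powers of `m`; for `m ≤ 2` none are needed.
  by_cases h' : m ^ 72 ≤ AA z * AA z₁ * AA z₂ ∨ m ≤ 2
  · refine fin (k := (1 + |z.2.1|) ^ (-2 : ℝ) * (1 + |z.2.2|) ^ (-2 : ℝ) *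
      ((1 + |sg z|) ^ (-(5 / 4) : ℝ) + (1 + |sg z₂|) ^ (-(5 / 4) : ℝ))) (by positivity) ?_ ?_
      (cC.trans c0)
    · refine (QQ_large hν hν' hε hP0 hPm hA hA₁ hA₂ hσ0 hX hXm hm1 h h').trans ?_
      refine mul_le_mul (by norm_num) ?_ (by positivity) (by norm_num)
      refine mul_le_mul hm4 (add_le_add ?_ ?_) (by positivity) (by positivity)
      · exact rpow_anti (by positivity) (hAs z) (by norm_num)
      · exact rpow_anti (by positivity) (hAs z₂) (by norm_num)
    · rw [ENNReal.ofReal_mul (by positivity), ENNReal.ofReal_mul (by positivity),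
        ENNReal.ofReal_add (by positivity) (by positivity)]
      unfold kerC
      rw [hz1]
      refine mul_le_mul' le_rfl ?_
      rw [add_assoc]
      exact le_add_self
  push Not at h'
  obtain ⟨h72, hm2⟩ := h'
  have hAm : AA z ≤ m ^ 72 := by
    refine le_trans ?_ h72.le
    rw [mul_assoc]; exact le_mul_of_one_le_right (by linarith) (one_le_mul_of_one_le_of_one_le hA₁ hA₂)
  have hA₁m : AA z₁ ≤ m ^ 72 := by
    refine le_trans ?_ h72.le
    rw [mul_comm (AA z), mul_assoc]
    exact le_mul_of_one_le_right (by linarith) (one_le_mul_of_one_le_of_one_le hA hA₂)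
  have hA₂m : AA z₂ ≤ m ^ 72 := by
    refine le_trans ?_ h72.le
    exact le_mul_of_one_le_left (by linarith) (one_le_mul_of_one_le_of_one_le hA hA₁)
  -- All quantities are now powers of `m`, and the two alternatives correspond to integrating in `z`
  -- with `z₁` frozen and in `z₁` with `z` frozen.
  rcases transversal hm hm2.le with ht | ⟨hs, ht⟩
  · have hQ := QQ_inner hν hνε hε' hP0 hPa hA hA₁ hA₂ hσ0 hX hm1 h hAm hA₁m hA₂m hJ hJm hXJ
    have gX : JJ z ^ (-(1 + ν)) ≤ (1 + |z.2.2|) ^ (-(1 + ν)) :=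
      rp (abs_nonneg _) (by unfold JJ; linarith [abs_nonneg z.2.1])
    have gY : JJ z ^ (-(1 + ν)) ≤ (1 + |z.2.1|) ^ (-(1 + ν)) :=
      rp (abs_nonneg _) (by unfold JJ; linarith [abs_nonneg z.2.2])
    have g1 := rp (abs_nonneg _) (hAs z)
    have g2 := rp (abs_nonneg _) (hAs z₂)
    rcases ht with ht | ht
    · refine fin (K := kerX (1 + ν) z z₁) ?_ ?_ (kerX_eq _ _ _).ge (cX.trans c0)
      · positivity
      refine hQ.trans ?_
      rw [hz1, hx, add_sub_cancel_left]
      calc _ ≤ 8 * ((10000 * |(z₁.2.1 + z₂.2.1) ^ 2 - z₂.2.1 ^ 2|) * (1 + |z.2.2|) ^ (-(1 + ν)) *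
            ((1 + |sg z|) ^ (-(1 + ν)) * (1 + |sg z₂|) ^ (-(1 + ν)))) := by
            gcongr; linarith
        _ = 80000 * (|(z₁.2.1 + z₂.2.1) ^ 2 - z₂.2.1 ^ 2| * (1 + |z.2.2|) ^ (-(1 + ν)) *
            ((1 + |sg z|) ^ (-(1 + ν)) * (1 + |sg z₂|) ^ (-(1 + ν)))) := by ring
        _ ≤ _ := by gcongr; norm_num
    · refine fin (K := kerY (1 + ν) z z₁) ?_ ?_ (kerY_eq _ _ _).ge (cY.trans c0)
      · positivity
      refine hQ.trans ?_
      rw [hz1, hy, add_sub_cancel_left]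
      calc _ ≤ 8 * ((10000 * |(z₁.2.2 + z₂.2.2) ^ 2 - z₂.2.2 ^ 2|) * (1 + |z.2.1|) ^ (-(1 + ν)) *
            ((1 + |sg z|) ^ (-(1 + ν)) * (1 + |sg z₂|) ^ (-(1 + ν)))) := by
            gcongr; linarith
        _ = 80000 * (|(z₁.2.2 + z₂.2.2) ^ 2 - z₂.2.2 ^ 2| * (1 + |z.2.1|) ^ (-(1 + ν)) *
            ((1 + |sg z|) ^ (-(1 + ν)) * (1 + |sg z₂|) ^ (-(1 + ν)))) := by ring
        _ ≤ _ := by gcongr; norm_num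
  · have hJ12 : m / 12 ≤ JJ z := by unfold JJ; rw [hx, hy]; linarith
    have hX12 : JJ z₁ * JJ z₂ / JJ z ≤ 12 * m := by
      refine hXJ.trans ?_
      rw [div_le_iff₀ (by linarith)]
      nlinarith
    have hQ := QQ_outer hν hνε hε' hP0 hPA hA hA₁ hA₂ hσ0 hX hm1 h hAm hA₁m hA₂m hX12
    have gX : m ^ (-(1 + ν)) ≤ (1 + |z₁.2.2|) ^ (-(1 + ν)) := rp (abs_nonneg _) (by linarith)
    have gY : m ^ (-(1 + ν)) ≤ (1 + |z₁.2.1|) ^ (-(1 + ν)) := rp (abs_nonneg _) (by linarith)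
    have g1 := rp (abs_nonneg _) (hAs z₁)
    have g2 := rp (abs_nonneg _) (hAs z₂)
    have hneg : |sg (z₁ - z)| = |sg z₂| := by
      rw [hz2, ← abs_neg]; congr 1; unfold sg
      simp only [Prod.fst_neg, Prod.snd_neg]; ring
    rcases ht with ht | ht
    · refine fin (K := kerX (1 + ν) z₁ z) ?_ ?_ (kerX_eq _ _ _).ge dX
      · positivity
      refine hQ.trans ?_
      rw [hneg, hx, sub_add_cancel_left, neg_sq]
      calc _ ≤ 24 * ((10000 * |z₁.2.1 ^ 2 - z₂.2.1 ^ 2|) * (1 + |z₁.2.2|) ^ (-(1 + ν)) *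
            ((1 + |sg z₁|) ^ (-(1 + ν)) * (1 + |sg z₂|) ^ (-(1 + ν)))) := by
            gcongr; linarith
        _ = _ := by ring
    · refine fin (K := kerY (1 + ν) z₁ z) ?_ ?_ (kerY_eq _ _ _).ge dY
      · positivity
      refine hQ.trans ?_
      rw [hneg, hy, sub_add_cancel_left, neg_sq]
      calc _ ≤ 24 * ((10000 * |z₁.2.2 ^ 2 - z₂.2.2 ^ 2|) * (1 + |z₁.2.1|) ^ (-(1 + ν)) *
            ((1 + |sg z₁|) ^ (-(1 + ν)) * (1 + |sg z₂|) ^ (-(1 + ν)))) := by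
            gcongr; linarith
        _ = _ := by ring

lemma QQ_comm (ν ε P A a₁ a₂ σ X : ℝ) : QQ ν ε P A a₁ a₂ σ X = QQ ν ε P A a₂ a₁ σ X := by
  unfold QQ; ring

/-- The pointwise kernel bound, symmetric in the two inputs. -/
lemma weight_le_ker {s ν ε : ℝ} (hν : 0 < ν) (hν' : ν ≤ 1 / 40) (hνε : 401 * ν ≤ 2 * ε)
    (hε' : ε ≤ 1 / 4) (hs : ε ≤ s + 1 / 2) (z₁ z₂ : ℝ × ℝ × ℝ) :
    ENNReal.ofReal (pp (z₁ + z₂) ^ 2 * (wt s (-(1 / 2)) (z₁ + z₂) * ww ν (z₁ + z₂))) ≤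
      ENNReal.ofReal 240000 * (ENNReal.ofReal (wt s ((1 - ν) / 2) z₁) *
        ENNReal.ofReal (wt s ((1 - ν) / 2) z₂)) *
      (SA (1 + ν) z₁ (z₁ + z₂) + SA (1 + ν) z₂ (z₁ + z₂) + SB (1 + ν) (z₁ + z₂) z₁ +
        SB (1 + ν) (z₁ + z₂) z₂) := by
  by_cases hσ : sg (z₁ + z₂) = 0
  · have : ww ν (z₁ + z₂) = 0 := by
      unfold ww
      rw [hσ, abs_zero, Real.zero_rpow hν.ne', Real.zero_rpow (by linarith), add_zero]
    simp [this]
  have w1 := wt_pos s ((1 - ν) / 2) z₁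
  have w2 := wt_pos s ((1 - ν) / 2) z₂
  have key := ENNReal.ofReal_le_ofReal (weight_le_QQ (s := s) hν hs z₁ z₂)
  rw [ENNReal.ofReal_mul (p := wt s ((1 - ν) / 2) z₁ * wt s ((1 - ν) / 2) z₂) (by positivity),
    ENNReal.ofReal_mul (p := wt s ((1 - ν) / 2) z₁) w1.le] at key
  refine key.trans ?_
  rw [mul_comm (ENNReal.ofReal 240000), mul_assoc _ (ENNReal.ofReal 240000)]
  refine mul_le_mul' le_rfl ?_
  rcases le_total |pp z₂| |pp z₁| with hp | hp
  · refine (QQ_le_ker hν hν' hνε hε' z₁ z₂ hp hσ).trans (mul_le_mul' le_rfl ?_)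
    exact (add_le_add le_self_add le_rfl).trans le_self_add
  · rw [QQ_comm, add_comm z₁ z₂, mul_comm (JJ z₁)]
    rw [add_comm] at hσ
    refine (QQ_le_ker hν hν' hνε hε' z₂ z₁ hp hσ).trans (mul_le_mul' le_rfl ?_)
    exact add_le_add (le_add_self.trans le_self_add) le_rfl

/-! ### The weighted bilinear estimate in frequency space -/

instance volume_haar2 : (volume : Measure (ℝ × ℝ)).IsAddHaarMeasure :=
  inferInstanceAs ((volume : Measure ℝ).prod (volume : Measure ℝ)).IsAddHaarMeasure

instance volume_haar3 : (volume : Measure (ℝ × ℝ × ℝ)).IsAddHaarMeasure :=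
  inferInstanceAs ((volume : Measure ℝ).prod (volume : Measure (ℝ × ℝ))).IsAddHaarMeasure

lemma lintegral_cs {α : Type*} [MeasurableSpace α] {μ : Measure α} {f g : α → ℝ≥0∞}
    (hf : Measurable f) (hg : Measurable g) :
    (∫⁻ x, f x * g x ∂μ) ^ 2 ≤ (∫⁻ x, f x ^ 2 ∂μ) * ∫⁻ x, g x ^ 2 ∂μ := by
  have := ENNReal.lintegral_mul_le_Lp_mul_Lq μ Real.HolderConjugate.two_two
    hf.aemeasurable hg.aemeasurable
  simp only [Pi.mul_apply, ENNReal.rpow_two] at this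
  calc _ ≤ ((∫⁻ x, f x ^ 2 ∂μ) ^ ((1 : ℝ) / 2) * (∫⁻ x, g x ^ 2 ∂μ) ^ ((1 : ℝ) / 2)) ^ 2 := by gcongr
    _ = _ := by rw [mul_pow, half_sq, half_sq]

lemma lintegral_mul_add3 {α : Type*} [MeasurableSpace α] {μ : Measure α} (K : ℝ≥0∞)
    {f g h : α → ℝ≥0∞} (hf : Measurable f) (hg : Measurable g) (hh : Measurable h) :
    ∫⁻ x, K * (f x + g x + h x) ∂μ = K * (∫⁻ x, f x ∂μ + ∫⁻ x, g x ∂μ + ∫⁻ x, h x ∂μ) := by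
  rw [lintegral_const_mul _ (by fun_prop), lintegral_add_right _ hh, lintegral_add_right _ hg]

lemma measurable_kernel_comp (S : ℝ × ℝ × ℝ → ℝ × ℝ × ℝ → ℝ≥0∞)
    (hS : Measurable fun w : (ℝ × ℝ × ℝ) × (ℝ × ℝ × ℝ) => S w.1 w.2) {α : Type*}
    [MeasurableSpace α] {a b : α → ℝ × ℝ × ℝ} (ha : Measurable a) (hb : Measurable b) :
    Measurable fun x => S (a x) (b x) :=
  hS.comp (ha.prodMk hb)

/-- Schur-type test with the kernel integrated in the input variable. -/
lemma test_inner {S : ℝ × ℝ × ℝ → ℝ × ℝ × ℝ → ℝ≥0∞}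
    (hS : Measurable fun w : (ℝ × ℝ × ℝ) × (ℝ × ℝ × ℝ) => S w.1 w.2) {C : ℝ≥0∞}
    (hC : ∀ z, ∫⁻ z₁, S z z₁ ≤ C) {F G : ℝ × ℝ × ℝ → ℝ≥0∞} (hF : Measurable F)
    (hG : Measurable G) :
    ∫⁻ z, (∫⁻ z₁, S z z₁ ^ ((1 : ℝ) / 2) * (F z₁ * G (z - z₁))) ^ 2 ≤
      C * ((∫⁻ z, F z ^ 2) * ∫⁻ z, G z ^ 2) := by
  have hS' : ∀ z, Measurable (S z) := fun z => hS.comp measurable_prodMk_left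
  calc _ ≤ ∫⁻ z, C * ∫⁻ z₁, F z₁ ^ 2 * G (z - z₁) ^ 2 := by
        refine lintegral_mono fun z => ?_
        refine (lintegral_cs ((hS' z).pow_const _) (by fun_prop)).trans ?_
        simp only [half_sq, mul_pow]
        gcongr
        exact hC z
    _ = C * ∫⁻ z₁, ∫⁻ z, F z₁ ^ 2 * G (z - z₁) ^ 2 := by
        rw [lintegral_const_mul _ (Measurable.lintegral_prod_right'
          (f := fun w : (ℝ × ℝ × ℝ) × (ℝ × ℝ × ℝ) => F w.2 ^ 2 * G (w.1 - w.2) ^ 2) (by fun_prop)),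
          lintegral_lintegral_swap (by fun_prop)]
    _ = _ := by
        have : ∀ z₁, ∫⁻ z, F z₁ ^ 2 * G (z - z₁) ^ 2 = F z₁ ^ 2 * ∫⁻ z, G z ^ 2 := fun z₁ => by
          rw [lintegral_const_mul _ (by fun_prop), lintegral_sub_right_eq_self (fun z => G z ^ 2)]
        simp only [this]
        rw [lintegral_mul_const _ (by fun_prop)]

/-- Schur-type test with the kernel integrated in the output variable. -/
lemma test_outer {S : ℝ × ℝ × ℝ → ℝ × ℝ × ℝ → ℝ≥0∞}
    (hS : Measurable fun w : (ℝ × ℝ × ℝ) × (ℝ × ℝ × ℝ) => S w.1 w.2) {C : ℝ≥0∞}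
    (hC : ∀ z₁, ∫⁻ z, S z z₁ ≤ C) {F G : ℝ × ℝ × ℝ → ℝ≥0∞} (hF : Measurable F)
    (hG : Measurable G) :
    ∫⁻ z, (∫⁻ z₁, S z z₁ ^ ((1 : ℝ) / 2) * (F z₁ * G (z - z₁))) ^ 2 ≤
      C * ((∫⁻ z, F z ^ 2) * ∫⁻ z, G z ^ 2) := by
  have hS' : ∀ z, Measurable (S z) := fun z => hS.comp measurable_prodMk_left
  have hS'' : ∀ z₁, Measurable (fun z => S z z₁) := fun z => hS.comp measurable_prodMk_right
  calc _ ≤ ∫⁻ z, (∫⁻ z, G z ^ 2) * ∫⁻ z₁, F z₁ ^ 2 * S z z₁ := by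
        refine lintegral_mono fun z => ?_
        have e : ∀ z₁, S z z₁ ^ ((1 : ℝ) / 2) * (F z₁ * G (z - z₁)) =
          G (z - z₁) * (F z₁ * S z z₁ ^ ((1 : ℝ) / 2)) := fun z₁ => by ring
        simp only [e]
        have := hS' z
        refine (lintegral_cs (by fun_prop) (by fun_prop)).trans ?_
        simp only [half_sq, mul_pow]
        rw [lintegral_sub_left_eq_self (fun z => G z ^ 2)]
    _ = (∫⁻ z, G z ^ 2) * ∫⁻ z₁, ∫⁻ z, F z₁ ^ 2 * S z z₁ := by
        rw [lintegral_const_mul _ (Measurable.lintegral_prod_right'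
          (f := fun w : (ℝ × ℝ × ℝ) × (ℝ × ℝ × ℝ) => F w.2 ^ 2 * S w.1 w.2) (by fun_prop)),
          lintegral_lintegral_swap (by fun_prop)]
    _ ≤ (∫⁻ z, G z ^ 2) * ∫⁻ z₁, F z₁ ^ 2 * C := by
        gcongr with z₁
        have := hS'' z₁
        rw [lintegral_const_mul _ (by fun_prop)]
        gcongr
        exact hC z₁
    _ = _ := by
        rw [lintegral_mul_const _ (by fun_prop)]; ring

@[fun_prop] lemma measurable_SA (r : ℝ) :
    Measurable fun w : (ℝ × ℝ × ℝ) × (ℝ × ℝ × ℝ) => SA r w.1 w.2 :=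
  (measurable_kerX r).add (measurable_kerY r)

@[fun_prop] lemma measurable_SB (r : ℝ) :
    Measurable fun w : (ℝ × ℝ × ℝ) × (ℝ × ℝ × ℝ) => SB r w.1 w.2 :=
  ((measurable_kerX r).add (measurable_kerY r)).add measurable_kerC

lemma measurable_S0 (r : ℝ) : Measurable fun w : (ℝ × ℝ × ℝ) × (ℝ × ℝ × ℝ) =>
    SA r w.2 w.1 + SA r (w.1 - w.2) w.1 := by
  exact (measurable_kernel_comp (SA r) (measurable_SA r) measurable_snd measurable_fst).add
    (measurable_kernel_comp (SA r) (measurable_SA r) (measurable_fst.sub measurable_snd)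
      measurable_fst)

lemma measurable_S2 (r : ℝ) : Measurable fun w : (ℝ × ℝ × ℝ) × (ℝ × ℝ × ℝ) =>
    SB r w.1 (w.1 - w.2) := by
  exact measurable_kernel_comp (SB r) (measurable_SB r) measurable_fst
    (measurable_fst.sub measurable_snd)

lemma lintegral_SA (r : ℝ) (z : ℝ × ℝ × ℝ) : ∫⁻ z₁, SA r z₁ z ≤ 4 * (∫⁻ t, gg r t) ^ 3 := by
  unfold SA
  have hm : Measurable fun z₁ => kerX r z₁ z := measurable_kernel_comp (kerX r) (measurable_kerX r) measurable_id measurable_const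
  rw [lintegral_add_left hm]
  calc _ ≤ 2 * (∫⁻ t, gg r t) ^ 3 + 2 * (∫⁻ t, gg r t) ^ 3 :=
        add_le_add (lintegral_kerX r z) (lintegral_kerY r z)
    _ = _ := by ring

/-- A uniform bound for the integrals of the model kernels. -/
def CK (r : ℝ) : ℝ≥0∞ := 8 * (∫⁻ t, gg r t) ^ 3 +
    (∫⁻ x, gg 2 x) ^ 2 * ((∫⁻ t, kk t) + (∫⁻ t, gg (5 / 4) t) + ∫⁻ t, gg (5 / 4) t)

lemma CK_lt_top {r : ℝ} (hr : 1 < r) : CK r < ∞ := by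
  have h1 := gg_lt_top hr
  have h2 := gg_lt_top (r := 2) (by norm_num)
  have h3 := gg_lt_top (r := 5 / 4) (by norm_num)
  have h4 := kk_lt_top
  unfold CK
  refine ENNReal.add_lt_top.2 ⟨ENNReal.mul_lt_top (by simp) (ENNReal.pow_lt_top h1),
    ENNReal.mul_lt_top (ENNReal.pow_lt_top h2)
      (ENNReal.add_lt_top.2 ⟨ENNReal.add_lt_top.2 ⟨h4, h3⟩, h3⟩)⟩

lemma lintegral_SB (r : ℝ) (z₁ : ℝ × ℝ × ℝ) : ∫⁻ z, SB r z z₁ ≤ CK r := by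
  have := lintegral_SA r z₁
  unfold SA at this
  unfold SB
  have hm : Measurable fun z => kerC z z₁ := measurable_kernel_comp kerC measurable_kerC measurable_id measurable_const
  rw [lintegral_add_right _ hm, lintegral_kerC]
  unfold CK
  refine add_le_add (this.trans ?_) le_rfl
  gcongr; norm_num

lemma add_sq_le3 (a b c : ℝ≥0∞) : (a + b + c) ^ 2 ≤ 3 * (a ^ 2 + b ^ 2 + c ^ 2) := by
  have h : ∀ x y : ℝ≥0∞, 2 * (x * y) ≤ x ^ 2 + y ^ 2 := fun x y => by
    rcases le_total x y with h | h
    · obtain ⟨d, rfl⟩ := exists_add_of_le h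
      calc 2 * (x * (x + d)) ≤ 2 * (x * (x + d)) + d ^ 2 := le_self_add
        _ = _ := by ring
    · obtain ⟨d, rfl⟩ := exists_add_of_le h
      calc 2 * ((y + d) * y) ≤ 2 * ((y + d) * y) + d ^ 2 := le_self_add
        _ = _ := by ring
  calc (a + b + c) ^ 2 = a ^ 2 + b ^ 2 + c ^ 2 + (2 * (a * b) + 2 * (b * c) + 2 * (a * c)) := by ring
    _ ≤ a ^ 2 + b ^ 2 + c ^ 2 + ((a ^ 2 + b ^ 2) + (b ^ 2 + c ^ 2) + (a ^ 2 + c ^ 2)) := by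
        gcongr <;> exact h _ _
    _ = _ := by ring

set_option maxHeartbeats 1000000 in
/-- The bilinear estimate for the Fourier transforms, in weighted `L²`. -/
lemma weighted_bilinear {s ν ε : ℝ} (hν : 0 < ν) (hν' : ν ≤ 1 / 40) (hνε : 401 * ν ≤ 2 * ε)
    (hε' : ε ≤ 1 / 4) (hs : ε ≤ s + 1 / 2) {f g : ℝ × ℝ × ℝ → ℝ≥0∞} (hf : Measurable f)
    (hg : Measurable g) :
    ∫⁻ z, ENNReal.ofReal (pp z ^ 2 * (wt s (-(1 / 2)) z * ww ν z)) *
        (∫⁻ z₁, f z₁ * g (z - z₁)) ^ 2 ≤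
      ENNReal.ofReal 240000 * (9 * CK (1 + ν)) *
        ((∫⁻ z, ENNReal.ofReal (wt s ((1 - ν) / 2) z) * f z ^ 2) *
          ∫⁻ z, ENNReal.ofReal (wt s ((1 - ν) / 2) z) * g z ^ 2) := by
  set b := (1 - ν) / 2 with hb
  set r := 1 + ν with hr
  set K := ENNReal.ofReal 240000
  set F : ℝ × ℝ × ℝ → ℝ≥0∞ := fun z => ENNReal.ofReal (wt s b z) ^ ((1 : ℝ) / 2) * f z with hF
  set G : ℝ × ℝ × ℝ → ℝ≥0∞ := fun z => ENNReal.ofReal (wt s b z) ^ ((1 : ℝ) / 2) * g z with hG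
  have hFm : Measurable F := by fun_prop
  have hGm : Measurable G := by fun_prop
  have hF2 : ∀ z, ENNReal.ofReal (wt s b z) * f z ^ 2 = F z ^ 2 := fun z => by
    rw [hF, mul_pow, half_sq]
  have hG2 : ∀ z, ENNReal.ofReal (wt s b z) * g z ^ 2 = G z ^ 2 := fun z => by
    rw [hG, mul_pow, half_sq]
  simp only [hF2, hG2]
  set S₀ : ℝ × ℝ × ℝ → ℝ × ℝ × ℝ → ℝ≥0∞ := fun z z₁ => SA r z₁ z + SA r (z - z₁) z with hS₀
  have mS₀ : Measurable fun w : (ℝ × ℝ × ℝ) × (ℝ × ℝ × ℝ) => S₀ w.1 w.2 := by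
    exact measurable_S0 r
  have bS₀ : ∀ z, ∫⁻ z₁, S₀ z z₁ ≤ CK r := fun z => by
    have m1 : Measurable fun z₁ => SA r z₁ z := measurable_kernel_comp (SA r) (measurable_SA r) measurable_id measurable_const
    rw [hS₀, lintegral_add_left m1, lintegral_sub_left_eq_self (fun z₁ => SA r z₁ z)]
    unfold CK
    refine le_trans (add_le_add (lintegral_SA r z) (lintegral_SA r z)) (le_trans (le_of_eq ?_)
      le_self_add)
    ring
  have I₀ := test_inner mS₀ bS₀ hFm hGm
  have I₁ := test_outer (measurable_SB r) (lintegral_SB r) hFm hGm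
  have I₂ := test_outer (measurable_SB r) (lintegral_SB r) hGm hFm
  have I₂' : ∫⁻ z, (∫⁻ z₁, SB r z (z - z₁) ^ ((1 : ℝ) / 2) * (F z₁ * G (z - z₁))) ^ 2 ≤
      CK r * ((∫⁻ z, F z ^ 2) * ∫⁻ z, G z ^ 2) := by
    rw [mul_comm (∫⁻ z, F z ^ 2)]
    refine le_trans (le_of_eq ?_) I₂
    congr 1; ext z
    rw [← lintegral_sub_left_eq_self (fun z₁ => SB r z z₁ ^ ((1 : ℝ) / 2) * (G z₁ * F (z - z₁))) z]
    congr 2; ext z₁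
    rw [sub_sub_cancel, mul_comm (F z₁)]
  have pw : ∀ z z₁, ENNReal.ofReal (pp z ^ 2 * (wt s (-(1 / 2)) z * ww ν z)) ^ ((1 : ℝ) / 2) *
      (f z₁ * g (z - z₁)) ≤ K ^ ((1 : ℝ) / 2) *
        (S₀ z z₁ ^ ((1 : ℝ) / 2) * (F z₁ * G (z - z₁)) +
        SB r z z₁ ^ ((1 : ℝ) / 2) * (F z₁ * G (z - z₁)) +
        SB r z (z - z₁) ^ ((1 : ℝ) / 2) * (F z₁ * G (z - z₁))) := by
    intro z z₁
    have h := weight_le_ker (s := s) hν hν' hνε hε' hs z₁ (z - z₁)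
    rw [add_sub_cancel] at h
    have h2 := ENNReal.rpow_le_rpow h (z := (1 : ℝ) / 2) (by norm_num)
    rw [ENNReal.mul_rpow_of_nonneg _ _ (by norm_num), ENNReal.mul_rpow_of_nonneg _ _ (by norm_num),
      ENNReal.mul_rpow_of_nonneg _ _ (by norm_num)] at h2
    have h3 : (S₀ z z₁ + SB r z z₁ + SB r z (z - z₁)) ^ ((1 : ℝ) / 2) ≤
        S₀ z z₁ ^ ((1 : ℝ) / 2) + SB r z z₁ ^ ((1 : ℝ) / 2) + SB r z (z - z₁) ^ ((1 : ℝ) / 2) :=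
      (ENNReal.rpow_add_le_add_rpow _ _ (by norm_num) (by norm_num)).trans
        (add_le_add (ENNReal.rpow_add_le_add_rpow _ _ (by norm_num) (by norm_num)) le_rfl)
    calc _ ≤ _ := mul_le_mul' (h2.trans (mul_le_mul' le_rfl h3)) le_rfl
      _ = _ := by rw [hF, hG]; ring
  have mm : ∀ (S : ℝ × ℝ × ℝ → ℝ × ℝ × ℝ → ℝ≥0∞),
      (Measurable fun w : (ℝ × ℝ × ℝ) × (ℝ × ℝ × ℝ) => S w.1 w.2) → (∀ z, Measurable fun z₁ =>
        S z z₁ ^ ((1 : ℝ) / 2) * (F z₁ * G (z - z₁))) ∧ Measurable fun z =>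
          (∫⁻ z₁, S z z₁ ^ ((1 : ℝ) / 2) * (F z₁ * G (z - z₁))) ^ 2 := by
    intro S hS
    have : Measurable fun w : (ℝ × ℝ × ℝ) × (ℝ × ℝ × ℝ) =>
      S w.1 w.2 ^ ((1 : ℝ) / 2) * (F w.2 * G (w.1 - w.2)) := by fun_prop
    exact ⟨fun z => this.comp measurable_prodMk_left, this.lintegral_prod_right'.pow_const _⟩
  have mSB' : Measurable fun w : (ℝ × ℝ × ℝ) × (ℝ × ℝ × ℝ) => SB r w.1 (w.1 - w.2) :=
    measurable_S2 r
  have m0 := mm S₀ mS₀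
  have m1 := mm (SB r) (measurable_SB r)
  have m2 := mm (fun z z₁ => SB r z (z - z₁)) mSB'
  have main : ∀ z, ENNReal.ofReal (pp z ^ 2 * (wt s (-(1 / 2)) z * ww ν z)) *
        (∫⁻ z₁, f z₁ * g (z - z₁)) ^ 2 ≤
      K * 3 * ((∫⁻ z₁, S₀ z z₁ ^ ((1 : ℝ) / 2) * (F z₁ * G (z - z₁))) ^ 2 +
        (∫⁻ z₁, SB r z z₁ ^ ((1 : ℝ) / 2) * (F z₁ * G (z - z₁))) ^ 2 +
        (∫⁻ z₁, SB r z (z - z₁) ^ ((1 : ℝ) / 2) * (F z₁ * G (z - z₁))) ^ 2) := by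
    intro z
    calc _ = (∫⁻ z₁, ENNReal.ofReal (pp z ^ 2 * (wt s (-(1 / 2)) z * ww ν z)) ^ ((1 : ℝ) / 2) *
      (f z₁ * g (z - z₁))) ^ 2 := by
          rw [lintegral_const_mul _ (by fun_prop), mul_pow, half_sq]
      _ ≤ (∫⁻ z₁, K ^ ((1 : ℝ) / 2) *
        (S₀ z z₁ ^ ((1 : ℝ) / 2) * (F z₁ * G (z - z₁)) +
        SB r z z₁ ^ ((1 : ℝ) / 2) * (F z₁ * G (z - z₁)) +
        SB r z (z - z₁) ^ ((1 : ℝ) / 2) * (F z₁ * G (z - z₁)))) ^ 2 := by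
          exact pow_le_pow_left' (lintegral_mono (pw z)) 2
      _ = K * ((∫⁻ z₁, S₀ z z₁ ^ ((1 : ℝ) / 2) * (F z₁ * G (z - z₁))) +
        (∫⁻ z₁, SB r z z₁ ^ ((1 : ℝ) / 2) * (F z₁ * G (z - z₁))) +
        (∫⁻ z₁, SB r z (z - z₁) ^ ((1 : ℝ) / 2) * (F z₁ * G (z - z₁)))) ^ 2 := by
          rw [lintegral_mul_add3 _ (m0.1 z) (m1.1 z) (m2.1 z), mul_pow, half_sq]
      _ ≤ _ := by rw [mul_assoc]; gcongr; exact add_sq_le3 _ _ _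
  refine (lintegral_mono main).trans ?_
  rw [lintegral_mul_add3 _ m0.2 m1.2 m2.2]
  calc _ ≤ K * 3 * (CK r * ((∫⁻ z, F z ^ 2) * ∫⁻ z, G z ^ 2) +
        CK r * ((∫⁻ z, F z ^ 2) * ∫⁻ z, G z ^ 2) + CK r * ((∫⁻ z, F z ^ 2) * ∫⁻ z, G z ^ 2)) := by
        gcongr
    _ = _ := by ring

/-! ### The Fourier transform of `(∂_x + ∂_y)(uv)` -/

section FourierSide

open FourierTransform LineDeriv
open scoped SchwartzMap Convolution

/-- `ℝ × ℝ × ℝ` with its Euclidean inner product. -/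
abbrev EE : Type := WithLp 2 (ℝ × WithLp 2 (ℝ × ℝ))

/-- The coordinate isomorphism `EE ≃ ℝ × ℝ × ℝ`. -/
def PhiE : EE ≃L[ℝ] ℝ × ℝ × ℝ :=
  (WithLp.prodContinuousLinearEquiv 2 ℝ ℝ (WithLp 2 (ℝ × ℝ))).trans
    ((ContinuousLinearEquiv.refl ℝ ℝ).prodCongr (WithLp.prodContinuousLinearEquiv 2 ℝ ℝ ℝ))

theorem PhiE_mp : MeasurePreserving (PhiE : EE → ℝ × ℝ × ℝ) :=
  ((MeasurePreserving.id (volume : Measure ℝ)).prod (WithLp.volume_preserving_ofLp ℝ ℝ)).comp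
    (WithLp.volume_preserving_ofLp ℝ (WithLp 2 (ℝ × ℝ)))

theorem inner_PhiE (a b : EE) : inner ℝ a b =
    (PhiE a).1 * (PhiE b).1 + (PhiE a).2.1 * (PhiE b).2.1 + (PhiE a).2.2 * (PhiE b).2.2 := by
  simp [PhiE, WithLp.prod_inner_apply]
  ring

/-- The frequency `z` in the normalisation `e^{-2πi⟨x, k⟩}` of the Fourier transform on `EE`. -/
def Afreq (z : ℝ × ℝ × ℝ) : EE := PhiE.symm ((2 * Real.pi)⁻¹ • z)

theorem continuous_Afreq : Continuous Afreq :=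
  PhiE.symm.continuous.comp (continuous_const_smul _)

theorem Afreq_sub (z w : ℝ × ℝ × ℝ) : Afreq (z - w) = Afreq z - Afreq w := by
  simp [Afreq, smul_sub]

/-- A Schwartz function on `ℝ × ℝ × ℝ` read on the Euclidean space `EE`. -/
def toEE (u : 𝓢(ℝ × ℝ × ℝ, ℂ)) : 𝓢(EE, ℂ) :=
  SchwartzMap.compCLMOfContinuousLinearEquiv ℂ PhiE u

theorem toEE_apply (u : 𝓢(ℝ × ℝ × ℝ, ℂ)) (x : EE) : toEE u x = u (PhiE x) := rfl

theorem ftt_eq_fourier (u : 𝓢(ℝ × ℝ × ℝ, ℂ)) (z : ℝ × ℝ × ℝ) :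
    ftt (fun t x y => u (t, x, y)) z.1 z.2.1 z.2.2 = 𝓕 (toEE u) (Afreq z) := by
  have hint : Integrable (fun p : ℝ × ℝ × ℝ =>
      Complex.exp (-Complex.I * ((p.1 * z.1 + p.2.1 * z.2.1 + p.2.2 * z.2.2 : ℝ) : ℂ)) * u p) := by
    refine (u.integrable (μ := volume)).bdd_mul (c := 1) (by fun_prop) ?_
    filter_upwards with p
    rw [Complex.norm_exp]
    simp
  have h1 : ftt (fun t x y => u (t, x, y)) z.1 z.2.1 z.2.2 = ∫ p : ℝ × ℝ × ℝ,
      Complex.exp (-Complex.I * ((p.1 * z.1 + p.2.1 * z.2.1 + p.2.2 * z.2.2 : ℝ) : ℂ)) * u p := by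
    rw [Measure.volume_eq_prod, integral_prod _ hint]
    unfold ftt
    refine integral_congr_ae ?_
    filter_upwards [hint.prod_right_ae] with t ht
    rw [Measure.volume_eq_prod, integral_prod _ ht]
  rw [h1, ← PhiE_mp.integral_comp PhiE.toHomeomorph.measurableEmbedding, SchwartzMap.fourier_coe,
    Real.fourier_eq']
  refine integral_congr_ae (Filter.Eventually.of_forall fun x => ?_)
  simp only [smul_eq_mul, toEE_apply]
  congr 2
  rw [inner_PhiE]
  have : PhiE (Afreq z) = (2 * Real.pi)⁻¹ • z := by simp [Afreq]
  rw [this]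
  have hpi : (Real.pi : ℂ) ≠ 0 := by exact_mod_cast Real.pi_ne_zero
  simp
  field_simp

theorem continuous_ftt (u : 𝓢(ℝ × ℝ × ℝ, ℂ)) :
    Continuous fun z : ℝ × ℝ × ℝ => ftt (fun t x y => u (t, x, y)) z.1 z.2.1 z.2.2 := by
  simp_rw [ftt_eq_fourier]
  exact (𝓕 (toEE u)).continuous.comp continuous_Afreq

/-- The pointwise product of two Schwartz functions. -/
def prodS {V : Type*} [NormedAddCommGroup V] [NormedSpace ℝ V] (f g : 𝓢(V, ℂ)) : 𝓢(V, ℂ) :=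
  SchwartzMap.pairing (ContinuousLinearMap.mul ℂ ℂ) f g

/-- The Fourier transform turns products into convolutions. -/
theorem fourier_prodS (f g : 𝓢(EE, ℂ)) (k : EE) :
    𝓕 (prodS f g) k = ∫ k₁, 𝓕 f k₁ * 𝓕 g (k - k₁) := by
  have h2 : ∀ (F : 𝓢(EE, ℂ)) (x : EE), 𝓕 (𝓕 F) x = F (-x) := by
    intro F x
    have : 𝓕⁻ (𝓕 F) (-x) = F (-x) := by simp
    rw [← this, SchwartzMap.fourierInv_apply_eq]
    simp
  have h3 : SchwartzMap.convolution (ContinuousLinearMap.mul ℂ ℂ) (𝓕 f) (𝓕 g) = 𝓕 (prodS f g) := by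
    have : 𝓕 (SchwartzMap.convolution (ContinuousLinearMap.mul ℂ ℂ) (𝓕 f) (𝓕 g))
        = 𝓕 (𝓕 (prodS f g)) := by
      rw [SchwartzMap.fourier_convolution]
      ext x
      rw [SchwartzMap.pairing_apply_apply, h2, h2, h2]
      rfl
    have := congrArg (fun F : 𝓢(EE, ℂ) => 𝓕⁻ F) this
    simpa using this
  rw [← h3, SchwartzMap.convolution_apply]
  rfl

/-- `(∂_x + ∂_y)(uv)` as a Schwartz function. -/
def dprod (u v : 𝓢(ℝ × ℝ × ℝ, ℂ)) : 𝓢(ℝ × ℝ × ℝ, ℂ) :=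
  ∂_{((0, 1, 1) : ℝ × ℝ × ℝ)} (prodS u v)

theorem dxdyProd_eq (u v : 𝓢(ℝ × ℝ × ℝ, ℂ)) :
    dxdyProd (fun t x y => u (t, x, y)) (fun t x y => v (t, x, y)) =
      fun t x y => dprod u v (t, x, y) := by
  funext t x y
  have hd : HasFDerivAt (prodS u v) (fderiv ℝ (prodS u v) (t, x, y)) (t, x, y) :=
    (prodS u v).differentiableAt.hasFDerivAt
  have hx : HasDerivAt (fun x' : ℝ => ((t, x', y) : ℝ × ℝ × ℝ)) (0, 1, 0) x :=
    (hasDerivAt_const x t).prodMk ((hasDerivAt_id x).prodMk (hasDerivAt_const x y))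
  have hy : HasDerivAt (fun y' : ℝ => ((t, x, y') : ℝ × ℝ × ℝ)) (0, 0, 1) y :=
    (hasDerivAt_const y t).prodMk ((hasDerivAt_const y x).prodMk (hasDerivAt_id y))
  have h1 := (hd.comp_hasDerivAt x hx).deriv
  have h2 := (hd.comp_hasDerivAt y hy).deriv
  have e1 : deriv (fun x' => u (t, x', y) * v (t, x', y)) x
      = fderiv ℝ (prodS u v) (t, x, y) (0, 1, 0) := h1
  have e2 : deriv (fun y' => u (t, x, y') * v (t, x, y')) y
      = fderiv ℝ (prodS u v) (t, x, y) (0, 0, 1) := h2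
  have e3 : dprod u v (t, x, y) = fderiv ℝ (prodS u v) (t, x, y) (0, 1, 1) := rfl
  simp only [dxdyProd]
  rw [e1, e2, e3, ← map_add]
  simp

theorem toEE_dprod (u v : 𝓢(ℝ × ℝ × ℝ, ℂ)) :
    toEE (dprod u v) = ∂_{PhiE.symm (0, 1, 1)} (prodS (toEE u) (toEE v)) := by
  have : prodS (toEE u) (toEE v) = toEE (prodS u v) := rfl
  rw [this, toEE, toEE, dprod, SchwartzMap.lineDerivOp_compCLMOfContinuousLinearEquiv]
  simp

theorem norm_ftt_dprod (u v : 𝓢(ℝ × ℝ × ℝ, ℂ)) (z : ℝ × ℝ × ℝ) :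
    ‖𝓕 (toEE (dprod u v)) (Afreq z)‖ = |pp z| * ‖𝓕 (prodS (toEE u) (toEE v)) (Afreq z)‖ := by
  have hg : (fun x : EE => inner ℝ x (PhiE.symm (0, 1, 1))).HasTemperateGrowth :=
    ((innerSL ℝ).flip (PhiE.symm (0, 1, 1))).hasTemperateGrowth
  rw [toEE_dprod, SchwartzMap.fourier_lineDerivOp_eq, smul_apply,
    SchwartzMap.smulLeftCLM_apply_apply hg, norm_smul, norm_smul, ← mul_assoc]
  congr 1
  rw [inner_PhiE]
  have : PhiE (Afreq z) = (2 * Real.pi)⁻¹ • z := by simp [Afreq]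
  rw [this]
  simp only [ContinuousLinearEquiv.apply_symm_apply, Prod.smul_fst, Prod.smul_snd, smul_eq_mul,
    mul_zero, mul_one, zero_add, ← mul_add, norm_mul, Real.norm_eq_abs, abs_inv, pp]
  have hp := Real.pi_pos
  simp [abs_of_pos hp]
  field_simp

/-- The substitution `k = Afreq z` in integrals. -/
theorem lintegral_Afreq : ∃ c : ℝ≥0∞, c ≠ ∞ ∧ ∀ G : EE → ℝ≥0∞, Measurable G →
    ∫⁻ k, G k = c * ∫⁻ z, G (Afreq z) := by
  have hpi : (2 * Real.pi)⁻¹ ≠ 0 := inv_ne_zero (by positivity)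
  refine ⟨ENNReal.ofReal |(((2 * Real.pi)⁻¹) ^ Module.finrank ℝ (ℝ × ℝ × ℝ))|,
    ENNReal.ofReal_ne_top, fun G hG => ?_⟩
  have hm : Measurable fun w : ℝ × ℝ × ℝ => G (PhiE.symm w) :=
    hG.comp PhiE.symm.continuous.measurable
  have h1 : ∫⁻ k, G k = ∫⁻ w : ℝ × ℝ × ℝ, G (PhiE.symm w) := by
    rw [← PhiE_mp.lintegral_comp hm]
    simp
  have h2 : ∫⁻ z, G (Afreq z)
      = ∫⁻ w, G (PhiE.symm w) ∂(Measure.map ((2 * Real.pi)⁻¹ • ·) (volume : Measure (ℝ × ℝ × ℝ))) := by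
    rw [lintegral_map hm (measurable_const_smul _)]
    rfl
  rw [h1, h2, Measure.map_addHaar_smul _ hpi, lintegral_smul_measure, smul_eq_mul, ← mul_assoc,
    ← ENNReal.ofReal_mul (abs_nonneg _), ← abs_mul, mul_inv_cancel₀ (pow_ne_zero _ hpi)]
  simp

/-- The pointwise bound `|F[(∂_x + ∂_y)(uv)]| ≤ C |ξ + η| (|ũ| ∗ |ṽ|)`. -/
theorem ftt_dxdyProd_le : ∃ c : ℝ≥0∞, c ≠ ∞ ∧ ∀ (u v : 𝓢(ℝ × ℝ × ℝ, ℂ)) (z : ℝ × ℝ × ℝ),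
    ‖ftt (dxdyProd (fun t x y => u (t, x, y)) (fun t x y => v (t, x, y))) z.1 z.2.1 z.2.2‖ₑ ≤
      c * (ENNReal.ofReal |pp z| * ∫⁻ z₁ : ℝ × ℝ × ℝ,
        ‖ftt (fun t x y => u (t, x, y)) z₁.1 z₁.2.1 z₁.2.2‖ₑ *
        ‖ftt (fun t x y => v (t, x, y)) (z - z₁).1 (z - z₁).2.1 (z - z₁).2.2‖ₑ) := by
  obtain ⟨c, hc, hcA⟩ := lintegral_Afreq
  refine ⟨c, hc, fun u v z => ?_⟩
  rw [dxdyProd_eq, ftt_eq_fourier, ← ofReal_norm, norm_ftt_dprod,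
    ENNReal.ofReal_mul (abs_nonneg _), ofReal_norm, mul_left_comm]
  gcongr
  simp_rw [ftt_eq_fourier, Afreq_sub]
  rw [fourier_prodS]
  refine (enorm_integral_le_lintegral_enorm _).trans ?_
  rw [hcA _ (by fun_prop)]
  simp [enorm_mul]

end FourierSide

/-! ### From weighted norms back to the Besov-type norms -/

theorem bilinear_sq {χ : ℝ → ℝ} (h : IsCut χ) {s ν ε : ℝ} (hν : 0 < ν) (hν' : ν ≤ 1 / 40)
    (hνε : 401 * ν ≤ 2 * ε) (hε' : ε ≤ 1 / 4) (hs : ε ≤ s + 1 / 2) :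
    ∃ K : ℝ≥0∞, K ≠ ∞ ∧ ∀ u v : SchwartzMap (ℝ × ℝ × ℝ) ℂ,
      Xnorm χ s (-(1 / 2))
          (dxdyProd (fun t x y => u (t, x, y)) (fun t x y => v (t, x, y))) ^ 2 ≤
        K * (Xnorm χ s ((1 - ν) / 2) (fun t x y => u (t, x, y)) *
            Xnorm χ s ((1 - ν) / 2) (fun t x y => v (t, x, y))) ^ 2 := by
  obtain ⟨C, -, hX⟩ := Xnorm_le_weighted h s (-(1 / 2)) hν
  obtain ⟨c, hc, hF⟩ := ftt_dxdyProd_le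
  set D : ℝ≥0∞ := ENNReal.ofReal (8 * (12 ^ |s| * 32 ^ |(1 - ν) / 2|)) with hD
  set B : ℝ≥0∞ := ENNReal.ofReal 240000 * (9 * CK (1 + ν)) with hB
  have hBtop : B ≠ ∞ := ENNReal.mul_ne_top ENNReal.ofReal_ne_top
    (ENNReal.mul_ne_top (by norm_num) (CK_lt_top (by linarith)).ne)
  refine ⟨ENNReal.ofReal C * (c ^ 2 * (B * (D * D))), ?_, fun u v => ?_⟩
  · exact ENNReal.mul_ne_top ENNReal.ofReal_ne_top (ENNReal.mul_ne_top (ENNReal.pow_ne_top hc)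
      (ENNReal.mul_ne_top hBtop (ENNReal.mul_ne_top ENNReal.ofReal_ne_top ENNReal.ofReal_ne_top)))
  have hmu := (continuous_ftt u).measurable
  have hmv := (continuous_ftt v).measurable
  have hmd : Measurable fun z : ℝ × ℝ × ℝ =>
      ftt (dxdyProd (fun t x y => u (t, x, y)) (fun t x y => v (t, x, y))) z.1 z.2.1 z.2.2 := by
    rw [dxdyProd_eq]
    exact (continuous_ftt _).measurable
  set f : ℝ × ℝ × ℝ → ℝ≥0∞ := fun z => ‖ftt (fun t x y => u (t, x, y)) z.1 z.2.1 z.2.2‖ₑ with hf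
  set g : ℝ × ℝ × ℝ → ℝ≥0∞ := fun z => ‖ftt (fun t x y => v (t, x, y)) z.1 z.2.1 z.2.2‖ₑ with hg
  have hfm : Measurable f := hmu.enorm
  have hgm : Measurable g := hmv.enorm
  have hof : ∀ {a : ℝ} (_ : 0 ≤ a) (w : ℂ),
      ENNReal.ofReal (a * ‖w‖ ^ 2) = ENNReal.ofReal a * ‖w‖ₑ ^ 2 := fun ha w => by
    rw [ENNReal.ofReal_mul ha, ENNReal.ofReal_pow (norm_nonneg _), ofReal_norm]
  have hu := weighted_le_Xnorm h s ((1 - ν) / 2) hmu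
  have hv := weighted_le_Xnorm h s ((1 - ν) / 2) hmv
  simp_rw [hof (wt_pos _ _ _).le] at hu hv
  calc Xnorm χ s (-(1 / 2))
          (dxdyProd (fun t x y => u (t, x, y)) (fun t x y => v (t, x, y))) ^ 2
      ≤ _ := hX _ hmd
    _ ≤ ENNReal.ofReal C * ∫⁻ z, c ^ 2 * (ENNReal.ofReal (pp z ^ 2 * (wt s (-(1 / 2)) z * ww ν z)) *
          (∫⁻ z₁, f z₁ * g (z - z₁)) ^ 2) := by
        gcongr with z
        have hw : 0 ≤ wt s (-(1 / 2)) z * ww ν z := mul_nonneg (wt_pos _ _ _).le (ww_nonneg _ _)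
        rw [hof hw, ENNReal.ofReal_mul (sq_nonneg _), ← sq_abs (pp z),
          ENNReal.ofReal_pow (abs_nonneg _)]
        calc _ ≤ ENNReal.ofReal (wt s (-(1 / 2)) z * ww ν z) *
              (c * (ENNReal.ofReal |pp z| * ∫⁻ z₁, f z₁ * g (z - z₁))) ^ 2 := by
              gcongr
              exact hF u v z
          _ = _ := by ring
    _ = ENNReal.ofReal C * (c ^ 2 * ∫⁻ z, ENNReal.ofReal (pp z ^ 2 * (wt s (-(1 / 2)) z * ww ν z)) *
          (∫⁻ z₁, f z₁ * g (z - z₁)) ^ 2) := by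
        rw [lintegral_const_mul' _ _ (ENNReal.pow_ne_top hc)]
    _ ≤ ENNReal.ofReal C * (c ^ 2 * (B * ((D * Xnorm χ s ((1 - ν) / 2) (fun t x y => u (t, x, y)) ^ 2)
          * (D * Xnorm χ s ((1 - ν) / 2) (fun t x y => v (t, x, y)) ^ 2)))) := by
        gcongr
        refine (weighted_bilinear hν hν' hνε hε' hs hfm hgm).trans ?_
        gcongr
    _ = _ := by ring

/-- The key bilinear estimate: for `s > -1/2` there exist `δ ∈ (0,1)` and `C > 0`
such that `‖(∂_x+∂_y)(uv)‖_{X^{s,-1/2,1}} ≤ C ‖u‖_{X^{s,(1-δ)/2,1}} ‖v‖_{X^{s,(1-δ)/2,1}}`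
for all Schwartz functions `u, v`. -/
theorem bilinear_estimate (s : ℝ) (hs : -(1 / 2) < s)
    (χ : ℝ → ℝ) (hχ_smooth : ContDiff ℝ (⊤ : ℕ∞) χ) (hχ_even : ∀ t, χ (-t) = χ t)
    (hχ_nonneg : ∀ t, 0 ≤ χ t) (hχ_le_one : ∀ t, χ t ≤ 1)
    (hχ_supp : Function.support χ ⊆ Set.Ioo (-2) 2)
    (hχ_one : ∀ t ∈ Set.Icc (-1 : ℝ) 1, χ t = 1) :
    ∃ δ C : ℝ, δ ∈ Set.Ioo (0 : ℝ) 1 ∧ 0 < C ∧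
      ∀ u v : SchwartzMap (ℝ × ℝ × ℝ) ℂ,
        Xnorm χ s (-(1 / 2))
            (dxdyProd (fun t x y => u (t, x, y)) (fun t x y => v (t, x, y))) ≤
          ENNReal.ofReal C *
            (Xnorm χ s ((1 - δ) / 2) (fun t x y => u (t, x, y)) *
              Xnorm χ s ((1 - δ) / 2) (fun t x y => v (t, x, y))) := by
  have hcut : IsCut χ := ⟨hχ_smooth.continuous, hχ_nonneg, hχ_le_one, hχ_supp, hχ_one⟩
  have hε0 : 0 < min (s + 1 / 2) (1 / 4) := lt_min (by linarith) (by norm_num)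
  have hε1 : min (s + 1 / 2) (1 / 4) ≤ 1 / 4 := min_le_right _ _
  have hε2 : min (s + 1 / 2) (1 / 4) ≤ s + 1 / 2 := min_le_left _ _
  generalize min (s + 1 / 2) (1 / 4) = ε at hε0 hε1 hε2
  obtain ⟨K, hK, hKb⟩ := bilinear_sq hcut (s := s) (ν := ε / 1000) (ε := ε) (by linarith)
    (by linarith) (by linarith) hε1 hε2
  -- `K ≤ (K + 1)²`, so `K + 1` serves as the constant after taking square roots.
  refine ⟨ε / 1000, K.toReal + 1, ⟨by linarith, by linarith⟩, by positivity, fun u v => ?_⟩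
  refine (ENNReal.pow_le_pow_left_iff two_ne_zero).1 ((hKb u v).trans ?_)
  have hK' : ENNReal.ofReal (K.toReal + 1) = K + 1 := by
    rw [ENNReal.ofReal_add ENNReal.toReal_nonneg zero_le_one, ENNReal.ofReal_toReal hK,
      ENNReal.ofReal_one]
  rw [hK', mul_pow (K + 1)]
  refine mul_le_mul_left ?_ _
  calc K ≤ K + 1 := le_self_add
    _ = (K + 1) * 1 := (mul_one _).symm
    _ ≤ (K + 1) * (K + 1) := by gcongr; exact le_add_self
    _ = (K + 1) ^ 2 := (sq _).symm
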